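/- arXiv:1907.12134 — 6 statements merged into one kernel-verified Lean document; each statement's English description precedes it below -/
import Mathlib

section
/- Let K ⊆ K' be an extension of fields and I ≤ K[x₁,…,xₙ] a proper ideal. Then the height of I·K'[x₁,…,xₙ] equals the height of I, and the Krull dimension of K'[x₁,…,xₙ]/(I·K'[x₁,…,xₙ]) equals the Krull dimension of K[x₁,…,xₙ]/I. -/
/-!
The argument works for any finitely generated `K`-algebra `A` in place of `K[x₁,…,xₙ]`, with
`A' = K' ⊗[K] A`.

Heights: `A'` is faithfully flat over `A`, because `K'` is so over `K`. By going down, a prime `P`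
of `A'` over `p` satisfies `ht P ≥ ht p`, with equality if `P` is minimal over `p A'` since then the
fibre contributes nothing; such a `P` exists for every `p` because `Spec A' → Spec A` is surjective.

Dimensions: `A' ⧸ I A'` is `K' ⊗[K] (A ⧸ I)`. Tensoring a Noether normalization
`K[y₁,…,yₛ] → A ⧸ I` with `K'` gives a Noether normalization `K'[y₁,…,yₛ] → A' ⧸ I A'`, and an
injective integral extension preserves the dimension, so both dimensions are `s`.
-/

/-- The height of an ideal `I`: the infimum of the heights of the prime ideals
containing `I` (the height of a prime being its height in the poset of primes). -/
noncomputable def idealHeight {R : Type*} [CommRing R] (I : Ideal R) : ℕ∞ :=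
  ⨅ (p : PrimeSpectrum R) (_ : I ≤ p.asIdeal), Order.height p

open scoped TensorProduct

section Height

variable {R S : Type*} [CommRing R] [CommRing S] [Algebra R S]

theorem idealHeight_eq_height (I : Ideal R) : idealHeight I = I.height := by
  apply le_antisymm
  · rw [Ideal.height_eq_inf_minimalPrimes]
    refine le_iInf₂ fun p hp => ?_
    have := hp.isPrime
    rw [PrimeSpectrum.height_eq_orderHeight ⟨p, this⟩]
    exact iInf₂_le (⟨p, this⟩ : PrimeSpectrum R) hp.le
  · refine le_iInf₂ fun p hp => ?_
    rw [← PrimeSpectrum.height_eq_orderHeight]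
    exact Ideal.height_mono hp

theorem height_le_height_of_liesOver [Algebra.HasGoingDown R S] (p : Ideal R) [hp : p.IsPrime]
    (P : Ideal S) [hP : P.IsPrime] [P.LiesOver p] : p.height ≤ P.height := by
  rw [PrimeSpectrum.height_eq_orderHeight ⟨p, hp⟩, PrimeSpectrum.height_eq_orderHeight ⟨P, hP⟩]
  refine Order.height_le fun l hl => ?_
  have : P.LiesOver l.last.asIdeal := by rwa [hl]
  obtain ⟨L, hlength, hlast, -⟩ := Ideal.exists_ltSeries_of_hasGoingDown l P
  rw [← hlength]
  exact Order.length_le_height hlast.le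

theorem height_le_height_map_of_hasGoingDown [Algebra.HasGoingDown R S] (I : Ideal R) :
    I.height ≤ (I.map (algebraMap R S)).height := by
  rw [Ideal.height_eq_inf_minimalPrimes (I := I.map _)]
  refine le_iInf₂ fun P hP => ?_
  have := hP.isPrime
  calc I.height ≤ (P.under R).height := Ideal.height_mono (Ideal.map_le_iff_le_comap.mp hP.le)
    _ ≤ P.height := height_le_height_of_liesOver (P.under R) P

theorem height_le_height_of_mem_minimalPrimes_map [IsNoetherianRing R] [IsNoetherianRing S]
    (p : Ideal R) [p.IsPrime] {P : Ideal S} [P.LiesOver p]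
    (hP : P ∈ (p.map (algebraMap R S)).minimalPrimes) : P.height ≤ p.height := by
  have := hP.isPrime
  have fibre_height : (P.map (Ideal.Quotient.mk (p.map (algebraMap R S)))).height = 0 := by
    rw [Ideal.minimalPrimes_eq_comap] at hP
    obtain ⟨q, hq, rfl⟩ := hP
    have := hq.isPrime
    rw [Ideal.map_comap_of_surjective _ Ideal.Quotient.mk_surjective]
    exact Ideal.height_eq_zero_iff.mpr hq
  simpa only [fibre_height, add_zero] using Ideal.height_le_height_add_of_liesOver p P

theorem exists_mem_minimalPrimes_map_liesOver (p : Ideal R) (Q : Ideal S) [Q.IsPrime]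
    [Q.LiesOver p] : ∃ P ∈ (p.map (algebraMap R S)).minimalPrimes, P ≤ Q ∧ P.LiesOver p := by
  have hpQ : p = Q.under R := Ideal.over_def Q p
  obtain ⟨P, hP, hPQ⟩ := Ideal.exists_minimalPrimes_le (Ideal.map_le_iff_le_comap.mpr hpQ.le)
  exact ⟨P, hP, hPQ, ⟨(Ideal.map_le_iff_le_comap.mp hP.le).antisymm
    ((Ideal.comap_mono hPQ).trans hpQ.ge)⟩⟩

theorem height_map_le_height_of_comap_surjective [IsNoetherianRing R] [IsNoetherianRing S]
    (h : Function.Surjective (PrimeSpectrum.comap (algebraMap R S))) (I : Ideal R) :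
    (I.map (algebraMap R S)).height ≤ I.height := by
  rw [Ideal.height_eq_inf_minimalPrimes (I := I)]
  refine le_iInf₂ fun p hp => ?_
  have := hp.isPrime
  obtain ⟨Q, hQ⟩ := h ⟨p, this⟩
  have : Q.asIdeal.LiesOver p := ⟨(congrArg PrimeSpectrum.asIdeal hQ).symm⟩
  obtain ⟨P, hP, -, _⟩ := exists_mem_minimalPrimes_map_liesOver p Q.asIdeal
  calc (I.map (algebraMap R S)).height
      ≤ P.height := Ideal.height_mono ((Ideal.map_mono hp.le).trans hP.le)
    _ ≤ p.height := height_le_height_of_mem_minimalPrimes_map p hP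

theorem height_map_eq_of_faithfullyFlat [IsNoetherianRing R] [IsNoetherianRing S]
    [Module.FaithfullyFlat R S] (I : Ideal R) : (I.map (algebraMap R S)).height = I.height :=
  le_antisymm
    (height_map_le_height_of_comap_surjective PrimeSpectrum.comap_surjective_of_faithfullyFlat I)
    (height_le_height_map_of_hasGoingDown I)

end Height

section Dimension

variable {A B : Type*} [CommRing A] [CommRing B]

theorem ringKrullDim_le_of_isIntegral [Algebra A B] [Algebra.IsIntegral A B] :
    ringKrullDim B ≤ ringKrullDim A :=
  Order.krullDim_le_of_strictMono (PrimeSpectrum.comap (algebraMap A B))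
    fun _ _ h => Ideal.IsIntegral.comap_lt_comap h

theorem ringKrullDim_le_of_hasGoingUp [Algebra A B] [Algebra.HasGoingUp A B]
    (h : Function.Surjective (PrimeSpectrum.comap (algebraMap A B))) :
    ringKrullDim A ≤ ringKrullDim B := by
  refine iSup_le fun l => ?_
  obtain ⟨P, hP⟩ := h l.head
  have : P.asIdeal.LiesOver l.head.asIdeal := ⟨(congrArg PrimeSpectrum.asIdeal hP).symm⟩
  obtain ⟨L, hL, -⟩ := Ideal.exists_ltSeries_of_hasGoingUp l P.asIdeal
  rw [← hL]
  exact Order.LTSeries.length_le_krullDim L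

theorem ringKrullDim_eq_of_isIntegral_of_injective {f : A →+* B} (hf : f.IsIntegral)
    (hinj : Function.Injective f) : ringKrullDim B = ringKrullDim A := by
  algebraize [f]
  have : FaithfulSMul A B := (faithfulSMul_iff_algebraMap_injective A B).mpr hinj
  exact ringKrullDim_le_of_isIntegral.antisymm
    (ringKrullDim_le_of_hasGoingUp (Algebra.IsIntegral.comap_surjective A B))

end Dimension

section BaseChange

section IsPushout

variable (R S A B : Type*) [CommRing R] [CommRing S] [CommRing A] [CommRing B]
  [Algebra R S] [Algebra R A] [Algebra R B] [Algebra S B] [Algebra A B]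
  [IsScalarTower R S B] [IsScalarTower R A B] [Algebra.IsPushout R S A B]

theorem faithfullyFlat_of_isPushout [Module.FaithfullyFlat R S] : Module.FaithfullyFlat A B :=
  have : Algebra.IsPushout R A S B := .symm inferInstance
  .of_linearEquiv _ _ (Algebra.IsPushout.equiv R A S B).symm.toLinearEquiv

theorem finiteType_of_isPushout [Algebra.FiniteType R A] : Algebra.FiniteType S B :=
  .equiv inferInstance (Algebra.IsPushout.equiv R S A B)

end IsPushout

variable (K K' : Type*) [Field K] [Field K'] [Algebra K K']

theorem ringKrullDim_tensorProduct (A : Type*) [CommRing A] [Algebra K A]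
    [Algebra.FiniteType K A] : ringKrullDim (K' ⊗[K] A) = ringKrullDim A := by
  rcases subsingleton_or_nontrivial A with _ | _
  · rw [ringKrullDim_eq_bot_of_subsingleton, ringKrullDim_eq_bot_of_subsingleton]
  obtain ⟨s, g, hinj, hfin⟩ := exists_finite_inj_algHom_of_fg K A
  let g' := Algebra.TensorProduct.map (AlgHom.id K' K') g
  have hinj' : Function.Injective g' :=
    Module.Flat.lTensor_preserves_injective_linearMap g.toLinearMap hinj
  have hfin' : g'.toRingHom.Finite := RingHom.Finite.tensorProductMap (.id K K') hfin
  calc ringKrullDim (K' ⊗[K] A)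
      = ringKrullDim (K' ⊗[K] MvPolynomial (Fin s) K) :=
        ringKrullDim_eq_of_isIntegral_of_injective hfin'.to_isIntegral hinj'
    _ = ringKrullDim (MvPolynomial (Fin s) K') :=
        ringKrullDim_eq_of_ringEquiv (MvPolynomial.algebraTensorAlgEquiv K K').toRingEquiv
    _ = ringKrullDim (MvPolynomial (Fin s) K) := by
        simp only [MvPolynomial.ringKrullDim_of_isNoetherianRing, ringKrullDim_eq_zero_of_field]
    _ = ringKrullDim A :=
        (ringKrullDim_eq_of_isIntegral_of_injective hfin.to_isIntegral hinj).symm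

variable {A A' : Type*} [CommRing A] [CommRing A'] [Algebra K A] [Algebra K' A'] [Algebra A A']
  [Algebra K A'] [IsScalarTower K A A'] [IsScalarTower K K' A']

theorem ringKrullDim_quotient_map_of_isPushout [Algebra.IsPushout K K' A A']
    [Algebra.FiniteType K A] (I : Ideal A) :
    ringKrullDim (A' ⧸ I.map (algebraMap A A')) = ringKrullDim (A ⧸ I) :=
  calc ringKrullDim (A' ⧸ I.map (algebraMap A A'))
      = ringKrullDim (A' ⊗[A] (A ⧸ I)) := ringKrullDim_eq_of_ringEquiv
        (Algebra.TensorProduct.quotIdealMapEquivTensorQuot A' I).toRingEquiv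
    _ = ringKrullDim (K' ⊗[K] (A ⧸ I)) := ringKrullDim_eq_of_ringEquiv
        (Algebra.IsPushout.cancelBaseChangeAlg K K' A A' (A ⧸ I)).toRingEquiv
    _ = ringKrullDim (A ⧸ I) := ringKrullDim_tensorProduct K K' (A ⧸ I)

theorem height_and_dim_base_change_general [Algebra.IsPushout K K' A A']
    [Algebra.FiniteType K A] (I : Ideal A) :
    idealHeight (I.map (algebraMap A A')) = idealHeight I ∧
    ringKrullDim (A' ⧸ I.map (algebraMap A A')) = ringKrullDim (A ⧸ I) := by
  have : Module.FaithfullyFlat A A' := faithfullyFlat_of_isPushout K K' A A'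
  have : Algebra.FiniteType K' A' := finiteType_of_isPushout K K' A A'
  have : IsNoetherianRing A := Algebra.FiniteType.isNoetherianRing K A
  have : IsNoetherianRing A' := Algebra.FiniteType.isNoetherianRing K' A'
  refine ⟨?_, ringKrullDim_quotient_map_of_isPushout K K' I⟩
  rw [idealHeight_eq_height, idealHeight_eq_height]
  exact height_map_eq_of_faithfullyFlat I

end BaseChange

/-- **Base change, height and dimension.**
Let `K ⊆ K'` be an extension of fields and `I` a proper ideal of `K[x₁,…,xₙ]`.
Then the height of the extended ideal `I·K'[x₁,…,xₙ]` equals the height of `I`,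
and the Krull dimension of `K'[x₁,…,xₙ]/(I·K'[x₁,…,xₙ])` equals the Krull
dimension of `K[x₁,…,xₙ]/I`. -/
theorem height_and_dim_base_change
    (K K' : Type*) [Field K] [Field K'] [Algebra K K']
    (n : ℕ) (I : Ideal (MvPolynomial (Fin n) K)) (hI : I ≠ ⊤) :
    idealHeight (Ideal.map (MvPolynomial.map (algebraMap K K')) I) = idealHeight I ∧
    ringKrullDim (MvPolynomial (Fin n) K' ⧸
        Ideal.map (MvPolynomial.map (algebraMap K K')) I)
      = ringKrullDim (MvPolynomial (Fin n) K ⧸ I) := by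
  let := MvPolynomial.algebraMvPolynomial (σ := Fin n) (R := K) (S := K')
  exact height_and_dim_base_change_general K K' I
end

section
/- Let K ⊆ K' be an extension of fields of characteristic 0 and I ≤ K[x₁,…,xₙ] an ideal. Then the radical commutes with extension: √(I·K'[x₁,…,xₙ]) = (√I)·K'[x₁,…,xₙ]. -/
/-!
The inclusion `⊇` holds for any ring homomorphism. For `⊆` it suffices that the extension of `√I`
is a radical ideal, and the quotient by it is `L ⊗ (A ⧸ √I)`. So everything rests on the fact that
over a perfect field `K` the tensor product of two reduced algebras is reduced.

To test whether `A ⊗ B` is reduced, with `A` reduced and `B` free, one may replace `A` by its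
residue fields, since the coordinates of a nilpotent tensor in a basis of `B` lie in every prime of
`A`. One use of this reduces the fact to `L ⊗ A` with `L` a finitely generated field extension of
`K`. Such an `L` is finite separable over some `F` purely transcendental over `K`. The ring
`F ⊗ A` is a localization of a polynomial ring over `A`, and a second use of the criterion, now
for `(F ⊗ A) ⊗_F L`, leaves only unramified algebras over fields, which are reduced.
-/

open TensorProduct

section CommRing

variable {R A B : Type*} [CommRing R] [CommRing A] [CommRing B] [Algebra R A] [Algebra R B]

theorem isReduced_of_isLocalization (M : Submonoid R) [IsLocalization M A] [IsReduced R] :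
    IsReduced A :=
  isReduced_of_injective (IsLocalization.algEquiv M A (Localization M)) (AlgEquiv.injective _)

theorem isReduced_tensorProduct_comm [IsReduced (A ⊗[R] B)] : IsReduced (B ⊗[R] A) :=
  isReduced_of_injective (Algebra.TensorProduct.comm R B A) (AlgEquiv.injective _)

theorem baseChange_repr_map {C ι : Type*} [CommRing C] [Algebra R C] (b : Module.Basis ι R B)
    (f : A →ₐ[R] C) (z : A ⊗[R] B) (i : ι) :
    (b.baseChange C).repr (Algebra.TensorProduct.map f (AlgHom.id R B) z) i =
      f ((b.baseChange A).repr z i) := by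
  induction z with
  | zero => simp
  | tmul a x => simp [Module.Basis.baseChange_repr_tmul]
  | add x y hx hy => simp [hx, hy]

theorem isReduced_tensorProduct_of_residueField [IsReduced A] [Module.Free R B]
    (h : ∀ (p : Ideal A) [p.IsPrime], IsReduced (p.ResidueField ⊗[R] B)) :
    IsReduced (A ⊗[R] B) := by
  refine ⟨fun z hz ↦ ?_⟩
  let b := Module.Free.chooseBasis R B
  suffices ∀ i, (b.baseChange A).repr z i = 0 from
    (b.baseChange A).repr.map_eq_zero_iff.mp (Finsupp.ext this)
  refine fun i ↦ IsNilpotent.eq_zero (nilpotent_iff_mem_prime.mpr fun p _ ↦ ?_)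
  let f : A →ₐ[R] p.ResidueField := IsScalarTower.toAlgHom R A p.ResidueField
  have hfz : Algebra.TensorProduct.map f (AlgHom.id R B) z = 0 :=
    have := h p
    (hz.map _).eq_zero
  have hf : f ((b.baseChange A).repr z i) = 0 := by
    rw [← baseChange_repr_map, hfz, map_zero, Finsupp.zero_apply]
  exact Ideal.algebraMap_residueField_eq_zero.mp hf

theorem isReduced_tensorProduct_of_formallyUnramified [IsReduced A] [Module.Free R B]
    [Algebra.FormallyUnramified R B] [Algebra.EssFiniteType R B] : IsReduced (A ⊗[R] B) :=
  isReduced_tensorProduct_of_residueField fun p _ ↦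
    Algebra.FormallyUnramified.isReduced_of_field p.ResidueField _

section Tower

variable (S : Type*) [CommRing S] [Algebra R S] [Algebra S B] [IsScalarTower R S B]

theorem isReduced_tensorProduct_tower [IsReduced ((S ⊗[R] A) ⊗[S] B)] : IsReduced (B ⊗[R] A) :=
  have : IsReduced (B ⊗[S] (S ⊗[R] A)) := isReduced_tensorProduct_comm
  isReduced_of_injective (Algebra.TensorProduct.cancelBaseChange R S S B A).symm
    (AlgEquiv.injective _)

theorem isReduced_tensorProduct_of_isLocalization (M : Submonoid S) [IsLocalization M B]
    [IsReduced (S ⊗[R] A)] : IsReduced (B ⊗[R] A) :=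
  have : IsReduced ((S ⊗[R] A) ⊗[S] B) :=
    isReduced_of_isLocalization (Algebra.algebraMapSubmonoid (S ⊗[R] A) M)
  isReduced_tensorProduct_tower S

theorem isReduced_tensorProduct_of_formallyUnramified_tower [Module.Free S B]
    [Algebra.FormallyUnramified S B] [Algebra.EssFiniteType S B] [IsReduced (S ⊗[R] A)] :
    IsReduced (B ⊗[R] A) :=
  have : IsReduced ((S ⊗[R] A) ⊗[S] B) := isReduced_tensorProduct_of_formallyUnramified
  isReduced_tensorProduct_tower S

end Tower

theorem isReduced_tensorProduct_algebraAdjoin [IsReduced A] {ι : Type*} {x : ι → B}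
    (hx : AlgebraicIndependent R x) : IsReduced (Algebra.adjoin R (Set.range x) ⊗[R] A) :=
  have : IsReduced (A ⊗[R] Algebra.adjoin R (Set.range x)) := isReduced_of_injective
    ((Algebra.TensorProduct.congr AlgEquiv.refl hx.aevalEquiv.symm).trans
      (MvPolynomial.algebraTensorAlgEquiv R A)) (AlgEquiv.injective _)
  isReduced_tensorProduct_comm

variable (R) in
theorem isRadical_map_of_isPushout (S : Type*) {C : Type*} [CommRing S] [CommRing C] [Algebra R S]
    [Algebra R C] [Algebra S C] [Algebra A C] [IsScalarTower R A C] [IsScalarTower R S C]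
    [Algebra.IsPushout R S A C] (I : Ideal A) [IsReduced (S ⊗[R] (A ⧸ I))] :
    (I.map (algebraMap A C)).IsRadical :=
  (Ideal.isRadical_iff_quotient_reduced _).mpr <| isReduced_of_injective
    ((Algebra.TensorProduct.quotIdealMapEquivTensorQuot C I).toRingEquiv.trans
      (Algebra.IsPushout.cancelBaseChangeAlg R S A C (A ⧸ I)).toRingEquiv)
    (RingEquiv.injective _)

end CommRing

section Field

variable {K A : Type*} [Field K] [CommRing A] [Algebra K A] [IsReduced A]

open scoped IntermediateField.algebraAdjoinAdjoin in
theorem isReduced_tensorProduct_intermediateFieldAdjoin {L ι : Type*} [Field L] [Algebra K L]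
    {x : ι → L} (hx : AlgebraicIndependent K x) :
    IsReduced (IntermediateField.adjoin K (Set.range x) ⊗[K] A) :=
  have := isReduced_tensorProduct_algebraAdjoin (A := A) hx
  isReduced_tensorProduct_of_isLocalization (Algebra.adjoin K (Set.range x)) (nonZeroDivisors _)

theorem isReduced_tensorProduct_of_essFiniteType [PerfectField K] {L : Type*} [Field L]
    [Algebra K L] [Algebra.EssFiniteType K L] : IsReduced (L ⊗[K] A) := by
  obtain ⟨s, hs, hsep⟩ := exists_isTranscendenceBasis_and_isSeparable_of_perfectField K L
  let F := IntermediateField.adjoin K (Set.range ((↑) : s → L))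
  have : Algebra.IsSeparable F L := by
    rw [← Subtype.range_coe (s := (s : Set L))] at hsep
    exact hsep
  have : Algebra.EssFiniteType F L := .of_comp K F L
  have : Algebra.FormallyUnramified F L := .of_isSeparable F L
  have : IsReduced (F ⊗[K] A) := isReduced_tensorProduct_intermediateFieldAdjoin hs.1
  exact isReduced_tensorProduct_of_formallyUnramified_tower F

theorem isReduced_tensorProduct_of_perfectField [PerfectField K] {B : Type*} [CommRing B]
    [Algebra K B] [IsReduced B] : IsReduced (A ⊗[K] B) := by
  refine IsReduced.tensorProduct_of_flat_of_forall_fg fun C hC ↦ ?_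
  have : Algebra.FiniteType K C := C.fg_iff_finiteType.mp hC
  have : IsReduced C := isReduced_of_injective C.val Subtype.val_injective
  have : IsReduced (C ⊗[K] A) := isReduced_tensorProduct_of_residueField fun p _ ↦
    have : Algebra.EssFiniteType K p.ResidueField := .comp K C _
    isReduced_tensorProduct_of_essFiniteType
  exact isReduced_tensorProduct_comm

end Field

theorem radical_base_change_general (K L A B : Type*) [Field K] [PerfectField K] [CommRing L]
    [IsReduced L] [CommRing A] [CommRing B] [Algebra K L] [Algebra K A] [Algebra K B]
    [Algebra L B] [Algebra A B] [IsScalarTower K L B] [IsScalarTower K A B]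
    [Algebra.IsPushout K L A B] (I : Ideal A) :
    (I.map (algebraMap A B)).radical = I.radical.map (algebraMap A B) := by
  refine le_antisymm ?_ (Ideal.map_radical_le _)
  have : IsReduced (A ⧸ I.radical) :=
    (Ideal.isRadical_iff_quotient_reduced _).mp I.radical_isRadical
  have : IsReduced (L ⊗[K] (A ⧸ I.radical)) := isReduced_tensorProduct_of_perfectField
  have hrad : (I.radical.map (algebraMap A B)).IsRadical := isRadical_map_of_isPushout K L _
  exact hrad.radical_le_iff.mpr (Ideal.map_mono Ideal.le_radical)

/-- **Base change, radicals.**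
Let `K ⊆ K'` be an extension of fields of characteristic `0` and `I` an ideal of
`K[x₁,…,xₙ]`.  Then the radical commutes with the extension of scalars:
`√(I·K'[x₁,…,xₙ]) = (√I)·K'[x₁,…,xₙ]`. -/
theorem radical_base_change
    (K K' : Type*) [Field K] [Field K'] [Algebra K K'] [CharZero K]
    (n : ℕ) (I : Ideal (MvPolynomial (Fin n) K)) :
    (Ideal.map (MvPolynomial.map (algebraMap K K')) I).radical
      = Ideal.map (MvPolynomial.map (algebraMap K K')) I.radical := by
  let _ : Algebra (MvPolynomial (Fin n) K) (MvPolynomial (Fin n) K') :=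
    MvPolynomial.algebraMvPolynomial
  exact radical_base_change_general K K' (MvPolynomial (Fin n) K) (MvPolynomial (Fin n) K') I
end

section
/- Let X ⊆ ℝⁿ be a real algebraic set, i.e. X = V_ℝ(I) for some ideal I ≤ ℝ[x₁,…,xₙ], and let p ∈ X. Then p is an analytic manifold point of X if and only if p is a smooth manifold point of X. -/
/-- A point `p` of a set `X ⊆ ℝⁿ` is an *analytic manifold point* of `X` (of dimension `d`)
if there are open sets `U, V ⊆ ℝⁿ` with `p ∈ U` and a bijection `φ : U → V` such that both
`φ` and its inverse `ψ` are real-analytic and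
`X ∩ U = { x ∈ U : φ_{d+1}(x) = … = φ_n(x) = 0 }`. -/
def IsAnalyticManifoldPointAt {n : ℕ} (X : Set (Fin n → ℝ)) (p : Fin n → ℝ) : Prop :=
  ∃ (d : ℕ) (U V : Set (Fin n → ℝ)) (φ ψ : (Fin n → ℝ) → (Fin n → ℝ)),
    IsOpen U ∧ IsOpen V ∧ p ∈ U ∧
    AnalyticOnNhd ℝ φ U ∧ AnalyticOnNhd ℝ ψ V ∧
    Set.MapsTo φ U V ∧ Set.MapsTo ψ V U ∧
    (∀ x ∈ U, ψ (φ x) = x) ∧ (∀ y ∈ V, φ (ψ y) = y) ∧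
    X ∩ U = { x ∈ U | ∀ i : Fin n, d ≤ (i : ℕ) → φ x i = 0 }

/-- A point `p` of a set `X ⊆ ℝⁿ` is a *smooth manifold point* of `X` (of dimension `d`)
if there are open sets `U, V ⊆ ℝⁿ` with `p ∈ U` and a bijection `φ : U → V` such that both
`φ` and its inverse `ψ` are `C^∞` and `X ∩ U = { x ∈ U : φ_{d+1}(x) = … = φ_n(x) = 0 }`. -/
def IsSmoothManifoldPointAt {n : ℕ} (X : Set (Fin n → ℝ)) (p : Fin n → ℝ) : Prop :=
  ∃ (d : ℕ) (U V : Set (Fin n → ℝ)) (φ ψ : (Fin n → ℝ) → (Fin n → ℝ)),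
    IsOpen U ∧ IsOpen V ∧ p ∈ U ∧
    ContDiffOn ℝ (⊤ : ℕ∞) φ U ∧ ContDiffOn ℝ (⊤ : ℕ∞) ψ V ∧
    Set.MapsTo φ U V ∧ Set.MapsTo ψ V U ∧
    (∀ x ∈ U, ψ (φ x) = x) ∧ (∀ y ∈ V, φ (ψ y) = y) ∧
    X ∩ U = { x ∈ U | ∀ i : Fin n, d ≤ (i : ℕ) → φ x i = 0 }

/-- The real zero set `V_ℝ(I) ⊆ ℝⁿ` of an ideal `I ≤ ℝ[x₁,…,xₙ]`. -/
def realZeroSet {n : ℕ} (I : Ideal (MvPolynomial (Fin n) ℝ)) : Set (Fin n → ℝ) :=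
  { p | ∀ f ∈ I, MvPolynomial.aeval p f = 0 }

/-!
Near a smooth manifold point, the inverse function theorem presents a real algebraic set `X` as
the graph of a smooth map over an open subset of its tangent space. Let `Γ` parametrize this graph.
Along a line `t ↦ a + t v` the point `Γ (a + t v)` is an isolated real point of the algebraic set
obtained from `X` by adding linear equations that depend polynomially on `t`. Elimination over
`ℝ[t]` yields a nonzero polynomial equation between `t` and each coordinate of `Γ (a + t v)`, and a
smooth function of one variable that satisfies such an equation is analytic, by Newton's method.
So `Γ` is smooth and analytic along lines, hence analytic by the Bochnak–Siciak theorem, and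
shearing along the graph is an analytic chart that straightens `X`.
-/

/-! ### Smooth algebraic functions of one variable -/

section PolynomialGerms

open Polynomial Filter Topology Asymptotics

lemma X_pow_succ_dvd_of_isLittleO {𝕜 : Type*} [NontriviallyNormedField 𝕜] {a : 𝕜[X]} {k : ℕ}
    (hdvd : X ^ k ∣ a) (ha : (fun t => a.eval t) =o[𝓝[≠] 0] (fun t => t ^ k)) :
    X ^ (k + 1) ∣ a := by
  obtain ⟨q, rfl⟩ := hdvd
  have hq_zero : Tendsto q.eval (𝓝[≠] 0) (𝓝 0) := by
    refine ha.tendsto_div_nhds_zero.congr' ?_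
    filter_upwards [self_mem_nhdsWithin] with t ht
    rw [eval_mul, eval_pow, eval_X, mul_div_cancel_left₀ _ (pow_ne_zero k ht)]
  have hq : q.eval 0 = 0 :=
    tendsto_nhds_unique ((q.continuous.tendsto 0).mono_left nhdsWithin_le_nhds) hq_zero
  rw [pow_succ]
  exact mul_dvd_mul_left _ (X_dvd_iff.2 (by rw [coeff_zero_eq_eval_zero, hq]))

lemma X_pow_dvd_of_isLittleO {𝕜 : Type*} [NontriviallyNormedField 𝕜] {a : 𝕜[X]} {k : ℕ}
    (ha : (fun t => a.eval t) =o[𝓝[≠] 0] (fun t => t ^ k)) : X ^ (k + 1) ∣ a := by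
  induction k with
  | zero => exact X_pow_succ_dvd_of_isLittleO (by simp) ha
  | succ k ih =>
    exact X_pow_succ_dvd_of_isLittleO
      (ih (ha.trans ((isLittleO_pow_pow k.lt_succ_self).mono nhdsWithin_le_nhds))) ha

lemma eventually_eval_ne_zero {𝕜 : Type*} [NormedField 𝕜] {c : 𝕜[X]} (hc : c ≠ 0) (a : 𝕜) :
    ∀ᶠ t in 𝓝[≠] a, c.eval t ≠ 0 :=
  nhdsNE_le_cofinite a (finite_setOfPred_isRoot hc).compl_mem_cofinite

lemma analyticAt_evalEval {𝕜 : Type*} [NontriviallyNormedField 𝕜] (P : 𝕜[X][X]) (x : 𝕜 × 𝕜) :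
    AnalyticAt 𝕜 (fun x : 𝕜 × 𝕜 => P.evalEval x.1 x.2) x := by
  induction P using Polynomial.induction_on' with
  | add P Q hP hQ => simpa only [evalEval_add] using hP.fun_add hQ
  | monomial k q =>
    simp only [evalEval, eval_monomial, eval_mul, eval_pow, eval_C]
    exact ((AnalyticOnNhd.eval_polynomial q (𝕜 := 𝕜) _ (Set.mem_univ _)).fun_comp
      analyticAt_fst).mul (analyticAt_snd.pow k)

lemma eval_eval_eq_evalEval {R : Type*} [CommSemiring R] (P : R[X][X]) (q : R[X]) (t : R) :
    (P.eval q).eval t = P.evalEval t (q.eval t) := by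
  rw [← eval₂_evalRingHom, ← coe_evalRingHom t, ← Polynomial.eval₂_at_apply]

lemma exists_evalEval_add_eq {R : Type*} [CommRing R] (P : R[X][X]) (T : R[X]) :
    ∃ ρ : R[X][X], ∀ t y, P.evalEval t (T.eval t + y) =
      (P.eval T).eval t + y * ((derivative P).eval T).eval t + y ^ 2 * ρ.evalEval t y := by
  obtain ⟨ρ, hρ⟩ : ∃ ρ, taylor T P = (ρ * X + C ((derivative P).eval T)) * X + C (P.eval T) := by
    refine ⟨(taylor T P).divX.divX, ?_⟩
    conv_lhs => rw [← divX_mul_X_add (taylor T P), ← divX_mul_X_add (taylor T P).divX,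
      coeff_divX, zero_add, taylor_coeff_one, taylor_coeff_zero]
  refine ⟨ρ, fun t y => ?_⟩
  have htaylor : P.evalEval t (T.eval t + y) = (taylor T P).evalEval t y := by
    rw [evalEval.eq_1 t y, taylor_eval, eval_eval_eq_evalEval, eval_add, eval_C, add_comm]
  rw [htaylor, hρ]
  simp only [evalEval_add, evalEval_mul, evalEval_X, evalEval_C]
  ring

end PolynomialGerms

section TaylorPolynomial

open Polynomial Filter Topology Asymptotics

lemma exists_polynomial_sub_eval_isLittleO {g : ℝ → ℝ} {K : ℕ} (hg : ContDiffAt ℝ K g 0) :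
    ∃ T : ℝ[X], (fun t => g t - T.eval t) =o[𝓝 0] (fun t => t ^ K) := by
  obtain ⟨u, hu, hgu⟩ := hg.contDiffOn le_rfl (by simp)
  obtain ⟨ε, hε, hεu⟩ := Metric.mem_nhds_iff.1 (by simpa using hu)
  have htaylor := taylor_isLittleO (convex_ball (0 : ℝ) ε) (Metric.mem_ball_self hε)
    (hgu.mono (by simpa using hεu))
  rw [nhdsWithin_eq_nhds.2 (Metric.ball_mem_nhds _ hε)] at htaylor
  simp only [taylor_within_apply, sub_zero, smul_eq_mul] at htaylor
  refine ⟨∑ k ∈ Finset.range (K + 1),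
    C ((k.factorial : ℝ)⁻¹ * iteratedDerivWithin k g (Metric.ball 0 ε) 0) * X ^ k,
    htaylor.congr_left fun t => ?_⟩
  simp only [eval_finsetSum, eval_mul, eval_C, eval_pow, eval_X, mul_right_comm]

end TaylorPolynomial

section SeparableAnnihilator

open Polynomial

lemma exists_map_eq_C_mul {R K : Type*} [CommRing R] [IsDomain R] [Field K] [Algebra R K]
    [IsFractionRing R K] (p : K[X]) :
    ∃ (c : R) (q : R[X]), c ≠ 0 ∧ q.map (algebraMap R K) = C (algebraMap R K c) * p := by
  obtain ⟨c, hc, hcq⟩ := IsLocalization.integerNormalization_spec (nonZeroDivisors R) p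
  refine ⟨c, _, nonZeroDivisors.ne_zero hc, hcq.trans ?_⟩
  rw [← Polynomial.smul_eq_C_mul, algebraMap_smul]

/-- The separability of the radical of `P₀` over the fraction field, after clearing
denominators. -/
lemma exists_bezout_derivative_of_ne_zero {R : Type*} [CommRing R] [IsDomain R] [CharZero R]
    {P₀ : R[X]} (hP₀ : P₀ ≠ 0) :
    ∃ (P A B : R[X]) (c : R) (k : ℕ), c ≠ 0 ∧ A * P + B * derivative P = C c ∧
      P₀ ∣ C c * P ^ k := by
  let K := FractionRing R
  let ι := algebraMap R K
  have hι : Function.Injective ι := IsFractionRing.injective R K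
  have : CharZero K := charZero_of_injective_algebraMap hι
  obtain ⟨Q, k, hQ, -, S, hS⟩ := exists_squarefree_dvd_pow_of_ne_zero
    ((Polynomial.map_ne_zero_iff hι).2 hP₀)
  obtain ⟨A, B, hAB⟩ := PerfectField.separable_iff_squarefree.2 hQ
  obtain ⟨q, P, hq, hP⟩ := exists_map_eq_C_mul (R := R) Q
  obtain ⟨a, A', ha, hA'⟩ := exists_map_eq_C_mul (R := R) A
  obtain ⟨b, B', hb, hB'⟩ := exists_map_eq_C_mul (R := R) B
  obtain ⟨s, S', hs, hS'⟩ := exists_map_eq_C_mul (R := R) S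
  refine ⟨P, C (b * s) * A', C (a * s) * B', q * a * b * s, k, by simp [*], ?_,
    C (q ^ (k + 1) * a * b) * S', ?_⟩ <;> apply Polynomial.map_injective ι hι
  · simp only [Polynomial.map_add, Polynomial.map_mul, Polynomial.map_C, ← derivative_map, hA',
      hB', hP, derivative_C_mul, map_mul, ι]
    linear_combination C (ι q) * C (ι a) * C (ι b) * C (ι s) * hAB
  · simp only [Polynomial.map_mul, Polynomial.map_pow, Polynomial.map_C, hS', hP, map_mul, map_pow,
      mul_pow, hS, ι]
    ring

end SeparableAnnihilator

section AlgebraicFunctions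

open Polynomial Filter Topology Asymptotics
open scoped ContDiff

lemma analyticAt_of_eventually_apply_eq {𝕜 E₁ E₂ F : Type*} [RCLike 𝕜]
    [NormedAddCommGroup E₁] [NormedSpace 𝕜 E₁] [CompleteSpace E₁]
    [NormedAddCommGroup E₂] [NormedSpace 𝕜 E₂] [CompleteSpace E₂]
    [NormedAddCommGroup F] [NormedSpace 𝕜 F] [CompleteSpace F]
    {H : E₁ × E₂ → F} {z : E₁ → E₂} {a : E₁} (hH : AnalyticAt 𝕜 H (a, z a))
    (hinv : (fderiv 𝕜 H (a, z a) ∘L .inr 𝕜 E₁ E₂).IsInvertible) (hz : ContinuousAt z a)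
    (hHz : ∀ᶠ t in 𝓝 a, H (t, z t) = H (a, z a)) : AnalyticAt 𝕜 z a := by
  have hω : (ω : ℕ∞ω) ≠ 0 := by simp
  have hgraph : Tendsto (fun t => (t, z t)) (𝓝 a) (𝓝 (a, z a)) := continuousAt_id.prodMk hz
  have hz_eq : hH.contDiffAt.implicitFunction hω hinv =ᶠ[𝓝 a] z := by
    filter_upwards [hHz, hgraph.eventually
      (hH.contDiffAt.eventually_apply_eq_iff_implicitFunction hω hinv)] with t ht ht_iff
    exact ht_iff.1 ht
  exact (hH.contDiffAt.contDiffAt_implicitFunction hω hinv).analyticAt.congr hz_eq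

variable {𝕜 : Type*} [RCLike 𝕜] {g : 𝕜 → 𝕜} {P : 𝕜[X][X]} {T : 𝕜[X]} {N : ℕ}

lemma X_pow_dvd_eval_of_isLittleO (hg : (fun t => g t - T.eval t) =o[𝓝 0] (fun t => t ^ N))
    (hP : ∀ᶠ t in 𝓝[≠] 0, P.evalEval t (g t) = 0) (hN : X ^ N ∣ (derivative P).eval T) :
    X ^ (2 * N + 1) ∣ P.eval T := by
  obtain ⟨e, he⟩ := hN
  obtain ⟨ρ, hρ⟩ := exists_evalEval_add_eq P T
  set s : 𝕜 → 𝕜 := fun t => g t - T.eval t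
  have hs : s =o[𝓝[≠] 0] (fun t => t ^ N) := hg.mono nhdsWithin_le_nhds
  have hs_bdd : s =O[𝓝[≠] 0] (fun t => t ^ N) := hs.isBigO
  have hs_zero : Tendsto s (𝓝[≠] 0) (𝓝 0) := by
    have hpow : (fun t : 𝕜 => t ^ N) =O[𝓝[≠] 0] (fun _ => (1 : 𝕜)) :=
      (((continuous_pow N).tendsto 0).mono_left nhdsWithin_le_nhds).isBigO_one 𝕜
    exact (isLittleO_one_iff 𝕜).1 (hs.trans_isBigO hpow)
  have he_bdd : e.eval =O[𝓝[≠] 0] (fun _ => (1 : 𝕜)) :=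
    ((e.continuous.tendsto 0).mono_left nhdsWithin_le_nhds).isBigO_one 𝕜
  have hρ_bdd : (fun t => ρ.evalEval t (s t)) =O[𝓝[≠] 0] (fun _ => (1 : 𝕜)) :=
    ((analyticAt_evalEval ρ (0, 0)).continuousAt.tendsto.comp
      ((tendsto_id.mono_left nhdsWithin_le_nhds).prodMk_nhds hs_zero)).isBigO_one 𝕜
  have hPT : (fun t => -(s t * (t ^ N * e.eval t) + s t * (s t * ρ.evalEval t (s t))))
      =ᶠ[𝓝[≠] 0] (P.eval T).eval := by
    filter_upwards [hP] with t ht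
    have := hρ t (s t)
    rw [add_sub_cancel, ht, he, eval_mul, eval_pow, eval_X] at this
    linear_combination this
  have hlin : (fun t => s t * (t ^ N * e.eval t)) =o[𝓝[≠] 0] (fun t => t ^ (2 * N)) := by
    simpa [two_mul, pow_add] using hs.mul_isBigO ((isBigO_refl _ _).mul he_bdd)
  have hquad : (fun t => s t * (s t * ρ.evalEval t (s t))) =o[𝓝[≠] 0] (fun t => t ^ (2 * N)) := by
    simpa [two_mul, pow_add] using hs.mul_isBigO (hs_bdd.mul hρ_bdd)
  exact X_pow_dvd_of_isLittleO ((hlin.add hquad).neg_left.congr' hPT .rfl)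

lemma analyticAt_of_add_mul_add_sq_mul_eq_zero {b e z : 𝕜 → 𝕜} {r : 𝕜 × 𝕜 → 𝕜}
    (hb : AnalyticAt 𝕜 b 0) (he : AnalyticAt 𝕜 e 0) (hr : AnalyticAt 𝕜 r (0, 0)) (he0 : e 0 ≠ 0)
    (hz : Tendsto z (𝓝 0) (𝓝 0))
    (heq : ∀ᶠ t in 𝓝 0, b t + z t * e t + z t ^ 2 * r (t, z t) = 0) : AnalyticAt 𝕜 z 0 := by
  have hz0 : z 0 = 0 := eq_of_tendsto_nhds hz
  let H : 𝕜 × 𝕜 → 𝕜 := fun x => b x.1 + x.2 * e x.1 + x.2 ^ 2 * r x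
  have hH : AnalyticAt 𝕜 H (0, 0) :=
    ((hb.comp_of_eq analyticAt_fst rfl).add
      (analyticAt_snd.mul (he.comp_of_eq analyticAt_fst rfl))).add
      ((analyticAt_snd.pow 2).mul hr)
  have hinv : (fderiv 𝕜 H (0, 0) ∘L .inr 𝕜 𝕜 𝕜).IsInvertible := by
    have hline : HasFDerivAt (fun w : 𝕜 => ((0 : 𝕜), w)) (.inr 𝕜 𝕜 𝕜) 0 :=
      hasFDerivAt_prodMk_right 0 0
    have hrline := (hr.differentiableAt.hasFDerivAt.comp 0 hline).hasDerivAt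
    have hHline : HasDerivAt (fun w => H (0, w)) (e 0) 0 := by
      simpa using (((hasDerivAt_id' (0 : 𝕜)).mul_const (e 0)).const_add (b 0)).fun_add
        ((hasDerivAt_pow 2 (0 : 𝕜)).fun_mul hrline)
    rw [(hH.differentiableAt.hasFDerivAt.comp 0 hline).unique hHline.hasFDerivAt]
    exact ⟨ContinuousLinearEquiv.unitsEquivAut 𝕜 (Units.mk0 _ he0), by ext; simp⟩
  have hH0 : H (0, z 0) = 0 := heq.self_of_nhds
  refine analyticAt_of_eventually_apply_eq (by rwa [hz0]) (by rwa [hz0]) ?_ ?_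
  · rwa [ContinuousAt, hz0]
  · rwa [hH0]

/-- Newton's method: in the variable `z` with `g = T + t ^ N z`, the equation `P(t, g) = 0` divided
by `t ^ (2 N)` is nonsingular at the origin. -/
lemma analyticAt_of_derivative_eval_eq {e : 𝕜[X]}
    (hg : (fun t => g t - T.eval t) =o[𝓝 0] (fun t => t ^ N))
    (hP : ∀ᶠ t in 𝓝[≠] 0, P.evalEval t (g t) = 0)
    (hN : (derivative P).eval T = X ^ N * e) (he : e.eval 0 ≠ 0) : AnalyticAt 𝕜 g 0 := by
  obtain ⟨a, ha⟩ := X_pow_dvd_eval_of_isLittleO hg hP (Dvd.intro e hN.symm)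
  obtain ⟨ρ, hρ⟩ := exists_evalEval_add_eq P T
  let z : 𝕜 → 𝕜 := fun t => (g t - T.eval t) / t ^ N
  have hz : Tendsto z (𝓝 0) (𝓝 0) := hg.tendsto_div_nhds_zero
  have hz0 : z 0 = 0 := eq_of_tendsto_nhds hz
  have hgz : (fun t => T.eval t + t ^ N * z t) =ᶠ[𝓝 0] g := by
    filter_upwards [hg.eventually_mul_div_cancel] with t ht
    rw [mul_comm]
    exact (congrArg (T.eval t + ·) ht).trans (add_sub_cancel _ _)
  have hpoly (q : 𝕜[X]) : AnalyticAt 𝕜 q.eval 0 :=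
    AnalyticOnNhd.eval_polynomial q (𝕜 := 𝕜) _ (Set.mem_univ _)
  have hr : AnalyticAt 𝕜 (fun x : 𝕜 × 𝕜 => ρ.evalEval x.1 (x.1 ^ N * x.2)) (0, 0) :=
    (analyticAt_evalEval ρ _).fun_comp (f := fun x : 𝕜 × 𝕜 => (x.1, x.1 ^ N * x.2))
      (analyticAt_fst.prod ((analyticAt_fst.pow _).mul analyticAt_snd))
  have heq : ∀ᶠ t in 𝓝 0, (X * a).eval t + z t * e.eval t +
      z t ^ 2 * ρ.evalEval t (t ^ N * z t) = 0 := by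
    filter_upwards [eventually_nhdsWithin_iff.1 hP, hgz] with t ht htz
    rcases eq_or_ne t 0 with rfl | ht0
    · simp [hz0]
    have hexp := hρ t (t ^ N * z t)
    rw [htz, ht ht0, ha, hN] at hexp
    refine (mul_eq_zero.1 ?_).resolve_left (pow_ne_zero (2 * N) ht0)
    simp only [eval_mul, eval_pow, eval_X] at hexp ⊢
    linear_combination -hexp
  have hz_an : AnalyticAt 𝕜 z 0 :=
    analyticAt_of_add_mul_add_sq_mul_eq_zero (hpoly (X * a)) (hpoly e) hr he hz heq
  exact ((hpoly T).add ((analyticAt_id.pow N).mul hz_an)).congr hgz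

/-- With `A P + B P' = c(t)` and a Taylor polynomial `T` of `g` of sufficiently high order, the
identity bounds the vanishing order of `P'(t, T(t))` at `0` by that of `c`, because `P(t, T(t))`
vanishes to a higher order than `P'(t, T(t))`. -/
theorem analyticAt_of_algebraic {P₀ : 𝕜[X][X]} (hP₀ : P₀ ≠ 0)
    (hg : ∀ K : ℕ, ∃ T : 𝕜[X], (fun t => g t - T.eval t) =o[𝓝 0] (fun t => t ^ K))
    (h₀ : ∀ᶠ t in 𝓝[≠] 0, P₀.evalEval t (g t) = 0) : AnalyticAt 𝕜 g 0 := by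
  obtain ⟨P, A, B, c, k, hc, hAB, hdvd⟩ := exists_bezout_derivative_of_ne_zero hP₀
  have hP : ∀ᶠ t in 𝓝[≠] 0, P.evalEval t (g t) = 0 := by
    filter_upwards [h₀, eventually_eval_ne_zero hc 0] with t ht hct
    have hdvd_t := map_dvd (evalEvalRingHom t (g t)) hdvd
    simp only [coe_evalEvalRingHom, ht, zero_dvd_iff, evalEval_mul, evalEval_C, evalEval_pow,
      mul_eq_zero, hct, false_or] at hdvd_t
    exact eq_zero_of_pow_eq_zero hdvd_t
  obtain ⟨M, hM⟩ : ∃ M, ¬ X ^ M ∣ c :=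
    ⟨c.natDegree + 1, fun h => by simpa using natDegree_le_of_dvd h hc⟩
  obtain ⟨T, hT⟩ := hg M
  have hβM : ¬ X ^ M ∣ (derivative P).eval T := by
    intro hβ
    have hα := X_pow_dvd_eval_of_isLittleO hT hP hβ
    have hcT : A.eval T * P.eval T + B.eval T * (derivative P).eval T = c := by
      simpa using congrArg (eval T) hAB
    exact hM (hcT ▸ dvd_add (((pow_dvd_pow X (by lia)).trans hα).mul_left _) (hβ.mul_left _))
  have hβ0 : (derivative P).eval T ≠ 0 := fun h => hβM (h ▸ dvd_zero _)
  obtain ⟨e, he, he0⟩ := exists_eq_pow_rootMultiplicity_mul_and_not_dvd _ hβ0 0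
  rw [map_zero, sub_zero] at he he0
  have hNM : rootMultiplicity 0 ((derivative P).eval T) < M := by
    by_contra! h
    exact hβM ((pow_dvd_pow X h).trans (Dvd.intro _ he.symm))
  exact analyticAt_of_derivative_eval_eq (hT.trans (isLittleO_pow_pow hNM)) hP he
    (by rwa [X_dvd_iff, coeff_zero_eq_eval_zero] at he0)

end AlgebraicFunctions

/-! ### Isolated points of families of real algebraic sets -/

section Eliminant

open MvPolynomial

variable {σ S : Type*} [CommRing S] {D : ℕ} {r : σ → MvPolynomial σ S}

lemma restrictTotalDegree_le_span_X_pow_add_sup_restrictDegree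
    (hr : ∀ i, (r i).totalDegree < D) (k : ℕ) :
    restrictTotalDegree σ S k ≤
      (Ideal.span (Set.range fun i => X i ^ D + r i)).restrictScalars S ⊔ restrictDegree σ S D := by
  induction k using Nat.strong_induction_on with
  | _ k ih =>
    rw [restrictTotalDegree, restrictSupport_eq_span, Submodule.span_le]
    rintro _ ⟨m, hm, rfl⟩
    by_cases hmD : ∀ i, m i ≤ D
    · exact Submodule.mem_sup_right ((monomial_mem_restrictSupport _).2 (Or.inl hmD))
    push Not at hmD
    obtain ⟨i, hi⟩ := hmD
    have hm_add : m - Finsupp.single i D + Finsupp.single i D = m :=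
      tsub_add_cancel_of_le (Finsupp.single_le_iff.2 hi.le)
    set m' := m - Finsupp.single i D
    have hreduce : monomial m (1 : S) =
        monomial m' 1 * (X i ^ D + r i) - monomial m' 1 * r i := by
      rw [← hm_add, monomial_add_single]
      ring
    have hdeg : (monomial m' (1 : S) * r i).totalDegree < k := by
      refine (totalDegree_mul ..).trans_lt ((Nat.add_lt_add_of_le_of_lt
        (totalDegree_monomial_le m' 1) (hr i)).trans_le ?_)
      rwa [Set.mem_ofPred_eq, ← hm_add, Finsupp.sum_add_index' (fun _ => rfl) (fun _ _ _ => rfl),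
        Finsupp.sum_single_index rfl] at hm
    change monomial m (1 : S) ∈ _
    rw [hreduce]
    refine Submodule.sub_mem _ (Submodule.mem_sup_left ?_) (ih _ hdeg ?_)
    · exact Ideal.mul_mem_left _ _ (Ideal.subset_span (Set.mem_range_self i))
    · exact (mem_restrictTotalDegree ..).2 le_rfl

lemma finite_quotient_span_X_pow_add [Finite σ] (hr : ∀ i, (r i).totalDegree < D) :
    Module.Finite S (MvPolynomial σ S ⧸ Ideal.span (Set.range fun i => X i ^ D + r i)) := by
  set J := Ideal.span (Set.range fun i => X i ^ D + r i)
  let f : restrictDegree σ S D →ₗ[S] MvPolynomial σ S ⧸ J :=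
    (Ideal.Quotient.mkₐ S J).toLinearMap ∘ₗ (restrictDegree σ S D).subtype
  refine Module.Finite.of_surjective f fun y => ?_
  obtain ⟨p, rfl⟩ := Ideal.Quotient.mk_surjective y
  obtain ⟨a, ha, b, hb, rfl⟩ := Submodule.mem_sup.1
    (restrictTotalDegree_le_span_X_pow_add_sup_restrictDegree hr p.totalDegree
      ((mem_restrictTotalDegree ..).2 le_rfl))
  refine ⟨⟨b, hb⟩, ?_⟩
  rw [map_add, Ideal.Quotient.eq_zero_iff_mem.2 ha, zero_add]
  rfl

lemma exists_monic_aeval_X_mem_span [Finite σ] (hr : ∀ i, (r i).totalDegree < D) (j : σ) :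
    ∃ W : Polynomial S, W.Monic ∧
      Polynomial.aeval (X j) W ∈ Ideal.span (Set.range fun i => X i ^ D + r i) := by
  have := finite_quotient_span_X_pow_add hr
  set J := Ideal.span (Set.range fun i => X i ^ D + r i)
  obtain ⟨W, hW, hWj⟩ := Algebra.IsIntegral.isIntegral (R := S) (Ideal.Quotient.mk J (X j))
  refine ⟨W, hW, Ideal.Quotient.eq_zero_iff_mem.1 ?_⟩
  rw [← hWj, Polynomial.aeval_def, Polynomial.hom_eval₂]
  rfl

lemma exists_monic_eval₂_eq_zero [Finite σ] (hr : ∀ i, (r i).totalDegree < D) (j : σ) :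
    ∃ W : Polynomial S, W.Monic ∧ ∀ {R : Type*} [CommRing R] (φ : S →+* R) (x : σ → R),
      (∀ i, x i ^ D + (r i).eval₂ φ x = 0) → W.eval₂ φ (x j) = 0 := by
  obtain ⟨W, hW, hWj⟩ := exists_monic_aeval_X_mem_span hr j
  refine ⟨W, hW, fun φ x hx => ?_⟩
  have hker : Ideal.span (Set.range fun i => X i ^ D + r i) ≤ RingHom.ker (eval₂Hom φ x) := by
    rw [Ideal.span_le]
    rintro _ ⟨i, rfl⟩
    simpa using hx i
  have := hker hWj
  rw [RingHom.mem_ker, Polynomial.aeval_def, Polynomial.hom_eval₂] at this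
  simpa [algebraMap_eq, eval₂Hom_comp_C] using this

end Eliminant

section CriticalPoints

open Filter Topology

lemma hasDerivAt_eval_update {σ 𝕜 : Type*} [DecidableEq σ] [NontriviallyNormedField 𝕜]
    (q : MvPolynomial σ 𝕜) (x : σ → 𝕜) (i : σ) :
    HasDerivAt (fun s => MvPolynomial.eval (Function.update x i s) q)
      (MvPolynomial.eval x (MvPolynomial.pderiv i q)) (x i) := by
  induction q using MvPolynomial.induction_on with
  | C a => simpa using hasDerivAt_const (x i) a
  | add p q hp hq => simpa only [map_add] using hp.fun_add hq
  | mul_X p j hp =>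
    have hX : HasDerivAt (fun s => Function.update x i s j)
        (MvPolynomial.eval x (MvPolynomial.pderiv i (MvPolynomial.X j))) (x i) := by
      rcases eq_or_ne j i with rfl | hij
      · simpa using hasDerivAt_id' (x j)
      · simpa [hij, MvPolynomial.pderiv_X, Pi.single_apply] using hasDerivAt_const (x i) (x j)
    convert! hp.fun_mul hX using 1
    · simp only [map_mul, MvPolynomial.eval_X]
    · simp only [Derivation.leibniz, map_add, map_mul, MvPolynomial.eval_X, smul_eq_mul,
        Function.update_eq_self]
      ring

lemma eval_pderiv_eq_zero_of_isLocalMin {σ : Type*} {q : MvPolynomial σ ℝ} {x : σ → ℝ}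
    (h : IsLocalMin (fun x => MvPolynomial.eval x q) x) (i : σ) :
    MvPolynomial.eval x (MvPolynomial.pderiv i q) = 0 := by
  classical
  have hline : Tendsto (Function.update x i) (𝓝 (x i)) (𝓝 x) := by
    have hcont : Continuous (Function.update x i) := continuous_const.update i continuous_id
    simpa using hcont.tendsto (x i)
  refine IsLocalMin.hasDerivAt_eq_zero ?_ (hasDerivAt_eval_update q x i)
  simpa [IsLocalMin, IsMinFilter] using hline.eventually h

/-- On the boundary of a small compact neighbourhood of `c` the function `q` has a positive lower
bound, so for large `δ` the minimum of `G + δ q` over that neighbourhood is attained inside. -/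
lemma eventually_exists_isLocalMin_add_mul {X : Type*} [TopologicalSpace X] [LocallyCompactSpace X]
    [T2Space X] {q G : X → ℝ} (hq : Continuous q) (hG : Continuous G) (hq_nonneg : ∀ x, 0 ≤ q x)
    {c : X} (hc : q c = 0) (hiso : ∀ᶠ x in 𝓝 c, q x = 0 → x = c) {U : Set X} (hU : U ∈ 𝓝 c) :
    ∀ᶠ δ : ℝ in atTop, ∃ x ∈ U, IsLocalMin (fun x => G x + δ * q x) x := by
  obtain ⟨K, hKc, hKU, hK⟩ := local_compact_nhds (inter_mem hU hiso)
  have hfr : frontier K ⊆ K := hK.isClosed.frontier_subset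
  have hfr_compact : IsCompact (frontier K) := hK.of_isClosed_subset isClosed_frontier hfr
  obtain ⟨μ, hμ, hμq⟩ := hfr_compact.exists_forall_le' hq.continuousOn (a := 0) fun x hx =>
    (hq_nonneg x).lt_of_ne fun h0 =>
      hx.2 (mem_interior_iff_mem_nhds.2 ((hKU (hfr hx)).2 h0.symm ▸ hKc))
  obtain ⟨b, hb⟩ := hfr_compact.bddBelow_image hG.continuousOn
  filter_upwards [eventually_ge_atTop 0,
    (tendsto_id.atTop_mul_const hμ).eventually_gt_atTop (G c - b)] with δ hδ hδμ
  obtain ⟨x, hx, hmin⟩ := hK.exists_isMinOn ⟨c, mem_of_mem_nhds hKc⟩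
    (hG.add (continuous_const.mul hq)).continuousOn
  refine ⟨x, (hKU hx).1, hmin.isLocalMin (mem_interior_iff_mem_nhds.1 ?_)⟩
  by_contra hxK
  have hx_fr : x ∈ frontier K := ⟨subset_closure hx, hxK⟩
  have hxc : G x + δ * q x ≤ G c := by simpa [hc] using hmin (mem_of_mem_nhds hKc)
  have hGx : b ≤ G x := hb (Set.mem_image_of_mem G hx_fr)
  have hqx : δ * μ ≤ δ * q x := mul_le_mul_of_nonneg_left (hμq x hx_fr) hδ
  exact absurd hδμ (by simp only [id]; linarith)

lemma frequently_prod_of_forall_mem_eventually {α β : Type*} {l : Filter α} [l.NeBot]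
    {l' : Filter β} {p : α → β → Prop} (h : ∀ U ∈ l', ∀ᶠ a in l, ∃ b ∈ U, p a b) :
    ∃ᶠ z in l ×ˢ l', p z.1 z.2 := by
  intro hnot
  obtain ⟨pa, hpa, pb, hpb, hp⟩ := eventually_prod_iff.1 hnot
  obtain ⟨a, ha, b, hb, hab⟩ := (hpa.and (h _ hpb)).exists
  exact hp ha hb hab

lemma frequently_pow_add_mul_eval_pderiv_eq_zero {σ : Type*} [Finite σ] (D : ℕ)
    {q : MvPolynomial σ ℝ} (hq : ∀ x, 0 ≤ MvPolynomial.eval x q) {c : σ → ℝ}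
    (hc : MvPolynomial.eval c q = 0) (hiso : ∀ᶠ x in 𝓝 c, MvPolynomial.eval x q = 0 → x = c) :
    ∃ᶠ z : ℝ × (σ → ℝ) in atTop ×ˢ 𝓝 c,
      ∀ i, z.2 i ^ D + z.1 * MvPolynomial.eval z.2 (MvPolynomial.pderiv i q) = 0 := by
  have := Fintype.ofFinite σ
  let g : MvPolynomial σ ℝ :=
    ∑ i, MvPolynomial.C ((D + 1 : ℝ)⁻¹) * MvPolynomial.X i ^ (D + 1)
  have hg (i : σ) (x : σ → ℝ) : MvPolynomial.eval x (MvPolynomial.pderiv i g) = x i ^ D := by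
    classical
    have hD : (D + 1 : ℝ) ≠ 0 := by positivity
    simp [g, MvPolynomial.pderiv_X, Pi.single_apply, Derivation.leibniz_pow, hD]
  refine frequently_prod_of_forall_mem_eventually (l := atTop) (l' := 𝓝 c) (p := fun δ x => ∀ i,
    x i ^ D + δ * MvPolynomial.eval x (MvPolynomial.pderiv i q) = 0) fun U hU => ?_
  filter_upwards [eventually_exists_isLocalMin_add_mul (MvPolynomial.continuous_eval q)
    (MvPolynomial.continuous_eval g) hq hc hiso hU] with δ ⟨x, hxU, hx⟩
  refine ⟨x, hxU, fun i => ?_⟩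
  have hmin : IsLocalMin (fun x => MvPolynomial.eval x (g + MvPolynomial.C δ * q)) x := by
    simpa using hx
  simpa [hg] using eval_pderiv_eq_zero_of_isLocalMin hmin i

end CriticalPoints

section IsolatedPoints

open Polynomial Filter Topology

/-- The reversed polynomial is annihilated by `1 / δ`, which tends to zero. -/
lemma map_leadingCoeff_eq_zero_of_tendsto {α R 𝕜 : Type*} [CommRing R] [NormedField 𝕜]
    {l : Filter α} {φ : α → R →+* 𝕜} {φ₀ : R →+* 𝕜} {δ : α → 𝕜}
    (hφ : ∀ a, Tendsto (fun k => φ k a) l (𝓝 (φ₀ a))) (hδ : Tendsto δ l (Bornology.cobounded 𝕜))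
    {W : R[X]} (hW : ∃ᶠ k in l, W.eval₂ (φ k) (δ k) = 0) : φ₀ W.leadingCoeff = 0 := by
  have hδ_inv : Tendsto (fun k => (δ k)⁻¹) l (𝓝 0) := tendsto_inv₀_cobounded.comp hδ
  have hlim : Tendsto (fun k => W.reverse.eval₂ (φ k) (δ k)⁻¹) l (𝓝 (φ₀ W.leadingCoeff)) := by
    have heval : W.reverse.eval₂ φ₀ 0 = φ₀ W.leadingCoeff := by
      rw [eval₂_at_zero, coeff_zero_reverse]
    rw [← heval]
    simp only [eval₂_eq_sum_range]
    exact tendsto_finsetSum _ fun i _ => (hφ _).mul (hδ_inv.pow i)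
  refine isClosed_singleton.mem_of_frequently_of_tendsto (s := {0}) ?_ hlim
  refine (hW.and_eventually (hδ.eventually_ne_cobounded 0)).mono fun k ⟨hWk, hk⟩ => ?_
  let := invertibleOfNonzero hk
  simpa using (eval₂_reverse_eq_zero_iff (φ k) (δ k) W).2 hWk

lemma eval₂_swap {R S : Type*} [CommSemiring R] [CommSemiring S] (φ : R →+* S) (y z : S)
    (W : R[X][X]) : (Bivariate.swap W).eval₂ (eval₂RingHom φ y) z =
      W.eval₂ (eval₂RingHom φ z) y := by
  have hcomp : (eval₂RingHom (eval₂RingHom φ y) z).comp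
      (Bivariate.swap (R := R)).toRingEquiv.toRingHom = eval₂RingHom (eval₂RingHom φ z) y := by
    ext <;> simp [Bivariate.swap_C, Bivariate.swap_Y]
  exact RingHom.congr_fun hcomp W

/-- The critical points approximating an isolated zero satisfy a system that is monic over `R[δ]`.
The polynomial `P` is the leading coefficient in `δ` of a monic equation for their `j`-th
coordinate. -/
lemma exists_eval₂_eq_zero_of_isolated_zero {σ R : Type*} [Finite σ] [CommRing R] [Nontrivial R]
    (Q : MvPolynomial σ R) (j : σ) :
    ∃ P : R[X], P ≠ 0 ∧ ∀ (φ : R →+* ℝ) (c : σ → ℝ), (∀ x, 0 ≤ Q.eval₂ φ x) → Q.eval₂ φ c = 0 →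
      (∀ᶠ x in 𝓝 c, Q.eval₂ φ x = 0 → x = c) → P.eval₂ φ (c j) = 0 := by
  have := Fintype.ofFinite σ
  let r (i : σ) : MvPolynomial σ R[X] := MvPolynomial.C X * (MvPolynomial.pderiv i Q).map C
  obtain ⟨D, hD⟩ : ∃ D, ∀ i, (r i).totalDegree < D :=
    ⟨Finset.univ.sup (fun i => (r i).totalDegree) + 1, fun i =>
      Nat.lt_succ_of_le (Finset.le_sup (f := fun i => (r i).totalDegree) (Finset.mem_univ i))⟩
  obtain ⟨W, hW, hWj⟩ := exists_monic_eval₂_eq_zero hD j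
  refine ⟨(Bivariate.swap W).leadingCoeff, ?_, fun φ c hQ hc hiso => ?_⟩
  · simpa using hW.ne_zero
  simp only [MvPolynomial.eval₂_eq_eval_map] at hQ hc hiso
  have hcrit := frequently_pow_add_mul_eval_pderiv_eq_zero D hQ hc hiso
  refine map_leadingCoeff_eq_zero_of_tendsto (l := atTop ×ˢ 𝓝 c) (δ := Prod.fst)
    (φ := fun z => eval₂RingHom φ (z.2 j)) (φ₀ := eval₂RingHom φ (c j)) (fun a => ?_)
    (tendsto_fst.mono_right IsOrderBornology.atTop_le_cobounded) (hcrit.mono fun z hz => ?_)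
  · simp only [coe_eval₂RingHom, eval₂_eq_eval_map]
    exact ((a.map φ).continuous.tendsto _).comp
      (((continuous_apply j).tendsto c).comp tendsto_snd)
  · rw [eval₂_swap]
    refine hWj _ z.2 fun i => ?_
    have hCφ : (eval₂RingHom φ z.1).comp C = φ := by ext; simp
    have hzi := hz i
    rw [MvPolynomial.pderiv_map, ← MvPolynomial.eval₂_eq_eval_map] at hzi
    simpa only [r, MvPolynomial.eval₂_mul, MvPolynomial.eval₂_C, MvPolynomial.eval₂_map, hCφ,
      coe_eval₂RingHom, eval₂_X] using hzi

lemma exists_nonneg_map_eq_zero_iff_le_ker {A : Type*} [CommRing A] {J : Ideal A} (hJ : J.FG) :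
    ∃ Q : A, ∀ θ : A →+* ℝ, 0 ≤ θ Q ∧ (θ Q = 0 ↔ J ≤ RingHom.ker θ) := by
  obtain ⟨s, rfl⟩ := hJ
  refine ⟨∑ f ∈ s, f ^ 2, fun θ => ?_⟩
  simp only [map_sum, map_pow]
  refine ⟨Finset.sum_nonneg fun f _ => sq_nonneg _, ?_⟩
  rw [Finset.sum_eq_zero_iff_of_nonneg fun f _ => sq_nonneg _, Ideal.span_le]
  simp [Set.subset_def]

/-- The real points of the fibre over `φ : R →+* ℝ` of the family of algebraic sets defined by an
ideal `J` of `R[x]`. -/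
def realFiber {σ R : Type*} [CommRing R] (J : Ideal (MvPolynomial σ R)) (φ : R →+* ℝ) :
    Set (σ → ℝ) :=
  {x | ∀ f ∈ J, f.eval₂ φ x = 0}

theorem exists_eval₂_eq_zero_of_isolated_realFiber {σ R : Type*} [Finite σ] [CommRing R]
    [Nontrivial R] {J : Ideal (MvPolynomial σ R)} (hJ : J.FG) (j : σ) :
    ∃ P : R[X], P ≠ 0 ∧ ∀ (φ : R →+* ℝ) (c : σ → ℝ), c ∈ realFiber J φ →
      (∀ᶠ x in 𝓝 c, x ∈ realFiber J φ → x = c) → P.eval₂ φ (c j) = 0 := by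
  obtain ⟨Q, hQ⟩ := exists_nonneg_map_eq_zero_iff_le_ker hJ
  have hQ_zero (φ : R →+* ℝ) (x : σ → ℝ) : Q.eval₂ φ x = 0 ↔ x ∈ realFiber J φ :=
    (hQ (MvPolynomial.eval₂Hom φ x)).2
  obtain ⟨P, hP, hPc⟩ := exists_eval₂_eq_zero_of_isolated_zero Q j
  refine ⟨P, hP, fun φ c hc hiso => hPc φ c (fun x => (hQ (MvPolynomial.eval₂Hom φ x)).1)
    ((hQ_zero φ c).2 hc) ?_⟩
  simpa only [hQ_zero] using hiso

end IsolatedPoints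

/-! ### Analyticity from analyticity along lines -/

section Polarization

open Finset

variable {ι R M N : Type*} [Fintype ι] [DecidableEq ι] [CommRing R] [AddCommGroup M] [Module R M]
  [AddCommGroup N] [Module R N]

lemma sum_multilinearMap_comp_perm (P : MultilinearMap R (fun _ : ι => M) N) (v₀ : M) (v : ι → M) :
    ∑ σ : Equiv.Perm ι, P (v ∘ σ) =
      ∑ r : ι → Option ι with ∀ i, ∃ j, r j = some i, P fun j => (r j).elim v₀ v := by
  refine sum_of_injOn (fun σ j => some (σ j)) (fun σ _ τ _ h => ?_) (fun σ _ => ?_)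
    (fun r hr hr_perm => (hr_perm ?_).elim) fun σ _ => rfl
  · exact Equiv.ext fun j => Option.some.inj (congrFun h j)
  · simpa using fun i => ⟨σ.symm i, σ.apply_symm_apply i⟩
  · choose s hs using (mem_filter.1 hr).2
    have hs_inj : Function.Injective s := fun i j hij =>
      Option.some.inj ((hs i).symm.trans (hij ▸ hs j))
    let τ := Equiv.ofBijective s (Finite.injective_iff_bijective.1 hs_inj)
    refine ⟨τ.symm, mem_coe.2 (mem_univ _), funext fun j => ?_⟩
    exact (hs (τ.symm j)).symm.trans (congrArg r (τ.apply_symm_apply j))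

/-- Expand the right side by multilinearity: a term is counted with the sum of `(-1) ^ #S` over all
sets `S` of indices `i` such that `v i` does not occur in it. -/
lemma sum_multilinearMap_comp_perm_eq_alternating_sum (P : MultilinearMap R (fun _ : ι => M) N)
    (v₀ : M) (v : ι → M) :
    ∑ σ : Equiv.Perm ι, P (v ∘ σ) =
      ∑ S : Finset ι, (-1 : ℤ) ^ #S • P fun _ => v₀ + ∑ i ∈ Sᶜ, v i := by
  let u : Option ι → M := fun o => o.elim v₀ v
  let missed (r : ι → Option ι) : Finset ι := {i | ∀ j, r j ≠ some i}
  have hexpand (S : Finset ι) : (P fun _ => v₀ + ∑ i ∈ Sᶜ, v i) =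
      ∑ r ∈ Fintype.piFinset fun _ => insertNone Sᶜ, P fun j => u (r j) := by
    rw [← P.map_sum_finset]
    simp only [sum_insertNone, u, Option.elim_none, Option.elim_some]
  have hmem (S : Finset ι) (r : ι → Option ι) :
      r ∈ Fintype.piFinset (fun _ => insertNone Sᶜ) ↔ S ∈ (missed r).powerset := by
    simp only [Fintype.mem_piFinset, mem_insertNone, Option.mem_def, mem_compl, mem_powerset,
      subset_iff, missed, mem_filter_univ]
    grind
  calc ∑ σ : Equiv.Perm ι, P (v ∘ σ)
      = ∑ r, if missed r = ∅ then P fun j => u (r j) else 0 := by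
        rw [sum_multilinearMap_comp_perm P v₀, sum_filter]
        simp [missed, u, filter_eq_empty_iff]
    _ = ∑ r, ∑ S ∈ (missed r).powerset, (-1 : ℤ) ^ #S • P fun j => u (r j) := by
        simp only [← sum_smul, sum_powerset_neg_one_pow_card, ite_smul, one_smul, zero_smul]
    _ = ∑ S : Finset ι, ∑ r ∈ Fintype.piFinset fun _ => insertNone Sᶜ,
          (-1 : ℤ) ^ #S • P fun j => u (r j) :=
        sum_comm' fun r S => by simp only [hmem, mem_univ, true_and, and_true]
    _ = ∑ S : Finset ι, (-1 : ℤ) ^ #S • P fun _ => v₀ + ∑ i ∈ Sᶜ, v i := by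
        simp only [hexpand, smul_sum]

end Polarization

section Symmetrization

open Metric
open scoped Nat

variable {ι E F : Type*} [Fintype ι] [NormedAddCommGroup E] [NormedSpace ℝ E]
  [NormedAddCommGroup F] [NormedSpace ℝ F]

lemma norm_sum_comp_perm_le [DecidableEq ι] {P : MultilinearMap ℝ (fun _ : ι => E) F} {v₀ : E}
    {ρ M : ℝ} (hP : ∀ w ∈ closedBall v₀ ρ, ‖P fun _ => w‖ ≤ M) {v : ι → E}
    (hv : ∑ i, ‖v i‖ ≤ ρ) :
    ‖∑ σ : Equiv.Perm ι, P (v ∘ σ)‖ ≤ 2 ^ Fintype.card ι * M := by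
  rw [sum_multilinearMap_comp_perm_eq_alternating_sum P v₀]
  have hterm (S : Finset ι) : ‖(-1 : ℤ) ^ S.card • P fun _ => v₀ + ∑ i ∈ Sᶜ, v i‖ ≤ M := by
    have hball : v₀ + ∑ i ∈ Sᶜ, v i ∈ closedBall v₀ ρ := by
      rw [mem_closedBall, dist_self_add_left]
      refine (norm_sum_le _ _).trans (le_trans ?_ hv)
      exact Finset.sum_le_univ_sum_of_nonneg fun _ => norm_nonneg _
    rcases neg_one_pow_eq_or ℤ S.card with h | h
    · simpa [h] using hP _ hball
    · simpa [h] using hP _ hball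
  simpa using norm_sum_le_of_le Finset.univ fun S _ => hterm S

variable [DecidableEq ι]

/-- The average of a multilinear map over all permutations of its arguments. It has the same values
on the diagonal, and these control its norm. -/
noncomputable def symmetrization (P : ContinuousMultilinearMap ℝ (fun _ : ι => E) F) :
    ContinuousMultilinearMap ℝ (fun _ : ι => E) F :=
  ((Fintype.card ι)! : ℝ)⁻¹ • ∑ σ : Equiv.Perm ι, P.domDomCongr σ

lemma symmetrization_apply (P : ContinuousMultilinearMap ℝ (fun _ : ι => E) F) (v : ι → E) :
    symmetrization P v = ((Fintype.card ι)! : ℝ)⁻¹ • ∑ σ : Equiv.Perm ι, P (v ∘ σ) := by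
  simp [symmetrization, Function.comp_def]

lemma symmetrization_apply_const (P : ContinuousMultilinearMap ℝ (fun _ : ι => E) F) (w : E) :
    (symmetrization P fun _ => w) = P fun _ => w := by
  have : ((Fintype.card ι)! : ℝ) ≠ 0 := by positivity
  simp [symmetrization_apply, Function.comp_def, Fintype.card_perm, ← Nat.cast_smul_eq_nsmul ℝ,
    smul_smul, this]

/-- Polarization with vectors of length at most `ρ / k`, combined with `k ^ k / k! ≤ e ^ k`. -/
lemma norm_symmetrization_le {P : ContinuousMultilinearMap ℝ (fun _ : ι => E) F} {v₀ : E}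
    {ρ M : ℝ} (hρ : 0 < ρ) (hP : ∀ w ∈ closedBall v₀ ρ, ‖P fun _ => w‖ ≤ M) :
    ‖symmetrization P‖ ≤ M * (4 * Real.exp 1 / ρ) ^ Fintype.card ι := by
  set k := Fintype.card ι with hk
  have hM : 0 ≤ M := (norm_nonneg _).trans (hP v₀ (mem_closedBall_self hρ.le))
  have hexp : (k : ℝ) ^ k / k ! ≤ Real.exp 1 ^ k := by
    simpa [← Real.exp_one_pow] using Real.pow_div_factorial_le_exp (k : ℝ) (by positivity) k
  refine ContinuousMultilinearMap.opNorm_le_bound (by positivity) fun v => ?_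
  have hk_pos (i : ι) : (0 : ℝ) < k := by exact_mod_cast Fintype.card_pos_iff.2 ⟨i⟩
  refine MultilinearMap.bound_of_shell (symmetrization P).toMultilinearMap
    (ε := fun _ => ρ / k) (c := fun _ => (2 : ℝ)) (fun i => div_pos hρ (hk_pos i)) (by simp)
    (fun u hu_ge hu_lt => ?_) v
  have hu_sum : ∑ i, ‖u i‖ ≤ ρ := by
    refine (Finset.sum_le_card_nsmul _ _ _ fun i _ => (hu_lt i).le).trans ?_
    rw [Finset.card_univ, ← hk, nsmul_eq_mul]
    calc k * (ρ / k) = ρ * (k / k) := by ring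
      _ ≤ ρ := mul_le_of_le_one_right hρ.le (div_self_le_one _)
  have hu_prod : (ρ / k / 2) ^ k ≤ ∏ i, ‖u i‖ := by
    rw [hk, ← Finset.card_univ, ← Finset.prod_const]
    exact Finset.prod_le_prod (fun i _ => by positivity) fun i _ => by simpa using hu_ge i
  calc ‖symmetrization P u‖ ≤ (k ! : ℝ)⁻¹ * (2 ^ k * M) := by
        rw [symmetrization_apply, norm_smul, Real.norm_of_nonneg (by positivity)]
        gcongr
        exact norm_sum_comp_perm_le hP hu_sum
    _ = M * (4 / ρ) ^ k * ((k : ℝ) ^ k / k !) * (ρ / k / 2) ^ k := by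
        have hkk : (k : ℝ) ^ k ≠ 0 := by exact_mod_cast Nat.pow_self_pos.ne'
        rw [show (4 : ℝ) = 2 * 2 by norm_num]
        simp only [div_pow, mul_pow]
        field_simp
    _ ≤ M * (4 / ρ) ^ k * Real.exp 1 ^ k * ∏ i, ‖u i‖ := by gcongr
    _ = M * (4 * Real.exp 1 / ρ) ^ k * ∏ i, ‖u i‖ := by
        rw [mul_assoc M, ← mul_pow, div_mul_eq_mul_div]

end Symmetrization

section TaylorSeries

open Filter Topology
open scoped ContDiff Nat

variable {E F : Type*} [NormedAddCommGroup E] [NormedSpace ℝ E] [NormedAddCommGroup F]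
  [NormedSpace ℝ F] {f : E → F} {q : E}

lemma tendsto_add_smul_nhds_zero (q v : E) : Tendsto (fun t : ℝ => q + t • v) (𝓝 0) (𝓝 q) := by
  have hcont : Continuous fun t : ℝ => q + t • v := by fun_prop
  simpa using hcont.tendsto 0

lemma iteratedDeriv_comp_add_smul (hf : ContDiffAt ℝ ∞ f q) (v : E) (k : ℕ) :
    ∀ᶠ t in 𝓝 (0 : ℝ), iteratedDeriv k (fun t : ℝ => f (q + t • v)) t =
      iteratedFDeriv ℝ k f (q + t • v) fun _ => v := by
  induction k with
  | zero => simp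
  | succ k ih =>
    have hf_near : ∀ᶠ x in 𝓝 q, ContDiffAt ℝ ((k : ℕ∞ω) + 1) f x :=
      (hf.of_le (by exact_mod_cast le_top)).eventually (by simp)
    filter_upwards [ih.eventually_nhds, (tendsto_add_smul_nhds_zero q v).eventually hf_near]
      with t ht hft
    rw [iteratedDeriv_succ, EventuallyEq.deriv_eq ht, hft.deriv_fderiv_add_smul]

/-- The Taylor series of `f` at `q`; it need not converge. -/
noncomputable def taylorSeriesAt (f : E → F) (q : E) : FormalMultilinearSeries ℝ E F :=
  fun k => (k ! : ℝ)⁻¹ • iteratedFDeriv ℝ k f q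

/-- The restriction of a formal multilinear series to the line through the origin spanned by `v`. -/
noncomputable def lineSeries (p : FormalMultilinearSeries ℝ E F) (v : E) :
    FormalMultilinearSeries ℝ ℝ F :=
  p.compContinuousLinearMap (ContinuousLinearMap.toSpanSingleton ℝ v)

lemma lineSeries_apply_const (p : FormalMultilinearSeries ℝ E F) (v : E) (k : ℕ) (t : ℝ) :
    (lineSeries p v k fun _ => t) = p k fun _ => t • v :=
  rfl

lemma hasFPowerSeriesAt_lineSeries_taylorSeriesAt [CompleteSpace F] (hf : ContDiffAt ℝ ∞ f q)
    {v : E} (hv : AnalyticAt ℝ (fun t : ℝ => f (q + t • v)) 0) :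
    HasFPowerSeriesAt (fun t : ℝ => f (q + t • v)) (lineSeries (taylorSeriesAt f q) v) 0 := by
  obtain ⟨p, r, hp⟩ := hv
  suffices p = lineSeries (taylorSeriesAt f q) v from this ▸ ⟨r, hp⟩
  funext k
  refine ContinuousMultilinearMap.ext_ring ?_
  have hfact : (k ! : ℝ) ≠ 0 := by positivity
  have hpk : k ! • (p k fun _ => 1) = iteratedFDeriv ℝ k f q fun _ => v := by
    rw [hp.factorial_smul, ← iteratedDeriv_eq_iteratedFDeriv]
    simpa using (iteratedDeriv_comp_add_smul hf v k).self_of_nhds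
  rw [lineSeries_apply_const, one_smul, taylorSeriesAt, smul_apply, ← hpk,
    ← Nat.cast_smul_eq_nsmul ℝ, inv_smul_smul₀ hfact]

lemma eventuallyEq_sum_symmetrization_taylorSeriesAt [CompleteSpace F] {f : E → F} {q : E}
    (hf : ContDiffAt ℝ ∞ f q) {v : E} (hv : AnalyticAt ℝ (fun t : ℝ => f (q + t • v)) 0)
    (hrad : 0 < FormalMultilinearSeries.radius fun k => symmetrization (taylorSeriesAt f q k)) :
    (fun t : ℝ => f (q + t • v)) =ᶠ[𝓝 0] fun t =>
      FormalMultilinearSeries.sum (fun k => symmetrization (taylorSeriesAt f q k)) (t • v) := by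
  have htv : Tendsto (fun t : ℝ => t • v) (𝓝 0) (𝓝 0) := by
    simpa using tendsto_add_smul_nhds_zero 0 v
  filter_upwards [(hasFPowerSeriesAt_lineSeries_taylorSeriesAt hf hv).eventually_hasSum,
    htv.eventually (FormalMultilinearSeries.hasFPowerSeriesOnBall _
      hrad).hasFPowerSeriesAt.eventually_hasSum] with t hline hsym
  simp only [zero_add, lineSeries_apply_const] at hline
  simp only [zero_add, symmetrization_apply_const] at hsym
  exact hline.unique hsym

lemma analyticAt_comp_add_smul {E F : Type*} [AddCommGroup E] [Module ℝ E]
    [NormedAddCommGroup F] [NormedSpace ℝ F] {f : E → F} {a v : E} {t₀ : ℝ}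
    (h : AnalyticAt ℝ (fun t : ℝ => f (a + t₀ • v + t • v)) 0) :
    AnalyticAt ℝ (fun t : ℝ => f (a + t • v)) t₀ := by
  have hshift : AnalyticAt ℝ (fun t : ℝ => t - t₀) t₀ := analyticAt_id.sub analyticAt_const
  refine (AnalyticAt.fun_comp (f := fun t : ℝ => t - t₀) (by simpa using h) hshift).congr
    (.of_forall fun t => ?_)
  simp only [add_assoc, ← add_smul, add_sub_cancel]

end TaylorSeries

section BochnakSiciak

open Filter Topology Metric
open scoped ContDiff

variable {E F : Type*} [NormedAddCommGroup E] [NormedSpace ℝ E] [CompleteSpace E]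
  [NormedAddCommGroup F] [NormedSpace ℝ F]

/-- Baire's theorem makes the geometric bounds in the individual directions uniform on a ball. -/
lemma exists_closedBall_norm_le_mul_pow {p : FormalMultilinearSeries ℝ E F}
    (hp : ∀ v, 0 < (lineSeries p v).radius) :
    ∃ M > 0, ∃ v₀ : E, ∃ ρ > 0, ∀ k, ∀ w ∈ closedBall v₀ ρ, ‖p k fun _ => w‖ ≤ M * M ^ k := by
  let A (m : ℕ) : Set E := {v | ∀ k, ‖p k fun _ => v‖ ≤ (m + 1) * (m + 1) ^ k}
  have hA_closed (m : ℕ) : IsClosed (A m) := by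
    simp only [A, Set.ofPred_forall]
    refine isClosed_iInter fun k => isClosed_le ?_ continuous_const
    exact ((p k).cont.comp (continuous_pi fun _ => continuous_id)).norm
  have hA_univ : ⋃ m, A m = Set.univ := by
    refine Set.eq_univ_of_forall fun v => ?_
    obtain ⟨C, s, -, hs, hCs⟩ := (lineSeries p v).le_mul_pow_of_radius_pos (hp v)
    obtain ⟨m, hm⟩ := exists_nat_ge (max C s)
    have hCm : C ≤ m + 1 := by linarith [le_max_left C s]
    have hsm : s ≤ m + 1 := by linarith [le_max_right C s]
    refine Set.mem_iUnion.2 ⟨m, fun k => ?_⟩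
    calc ‖p k fun _ => v‖ = ‖lineSeries p v k fun _ => 1‖ := by
          rw [lineSeries_apply_const, one_smul]
      _ ≤ ‖lineSeries p v k‖ := by simp
      _ ≤ C * s ^ k := hCs k
      _ ≤ (m + 1) * (m + 1) ^ k := by gcongr
  obtain ⟨m, v₀, hv₀⟩ := nonempty_interior_of_iUnion_of_closed hA_closed hA_univ
  obtain ⟨ρ, hρ, hsub⟩ := nhds_basis_closedBall.mem_iff.1 (mem_interior_iff_mem_nhds.1 hv₀)
  exact ⟨m + 1, by positivity, v₀, ρ, hρ, fun k w hw => hsub hw k⟩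

lemma radius_symmetrization_pos {p : FormalMultilinearSeries ℝ E F}
    (hp : ∀ v, 0 < (lineSeries p v).radius) :
    0 < FormalMultilinearSeries.radius fun k => symmetrization (p k) := by
  obtain ⟨M, hM, v₀, ρ, hρ, hbound⟩ := exists_closedBall_norm_le_mul_pow hp
  set A := M * (4 * Real.exp 1 / ρ) with hA
  have hA_pos : 0 < A := by positivity
  refine lt_of_lt_of_le ?_ (FormalMultilinearSeries.le_radius_of_bound (r := A⁻¹.toNNReal) _ M
    fun k => ?_)
  · simpa using hA_pos
  · have hnorm := norm_symmetrization_le hρ (hbound k)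
    rw [Fintype.card_fin, mul_assoc, ← mul_pow, ← hA] at hnorm
    rw [Real.coe_toNNReal _ (by positivity)]
    calc ‖symmetrization (p k)‖ * A⁻¹ ^ k ≤ M * A ^ k * A⁻¹ ^ k := by gcongr
      _ = M := by rw [mul_assoc, ← mul_pow, mul_inv_cancel₀ hA_pos.ne', one_pow, mul_one]

/-- Bochnak–Siciak. By Baire's theorem the symmetrized Taylor series converges near `q`, and by the
identity theorem on segments its sum is `f`. -/
theorem analyticAt_of_analyticAt_lines [CompleteSpace F] {f : E → F} {q : E}
    (hf : ContDiffAt ℝ ∞ f q)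
    (hlines : ∀ᶠ a in 𝓝 q, ∀ v : E, AnalyticAt ℝ (fun t : ℝ => f (a + t • v)) 0) :
    AnalyticAt ℝ f q := by
  let Q : FormalMultilinearSeries ℝ E F := fun k => symmetrization (taylorSeriesAt f q k)
  have hQ : 0 < Q.radius := radius_symmetrization_pos fun v =>
    (hasFPowerSeriesAt_lineSeries_taylorSeriesAt hf (hlines.self_of_nhds v)).radius_pos
  have hsum := Q.hasFPowerSeriesOnBall hQ
  obtain ⟨r, hr, hball⟩ := eventually_nhds_iff_ball.1 hlines
  obtain ⟨R, hR, hRQ⟩ := Metric.mem_nhds_iff.1 (eball_mem_nhds (0 : E) hQ)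
  have heq : ∀ v ∈ ball (0 : E) (min r R), f (q + v) = Q.sum v := by
    intro v hv
    rw [mem_ball_zero_iff, lt_min_iff] at hv
    have hseg : ∀ t ∈ Set.Icc (0 : ℝ) 1, ‖t • v‖ ≤ ‖v‖ := fun t ht => by
      rw [norm_smul, Real.norm_of_nonneg ht.1]
      exact mul_le_of_le_one_left (norm_nonneg _) ht.2
    have hf_line : AnalyticOnNhd ℝ (fun t : ℝ => f (q + t • v)) (Set.Icc 0 1) := fun t ht =>
      analyticAt_comp_add_smul (hball _ (by simpa using (hseg t ht).trans_lt hv.1) v)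
    have hQ_line : AnalyticOnNhd ℝ (fun t : ℝ => Q.sum (t • v)) (Set.Icc 0 1) := fun t ht =>
      (hsum.analyticAt_of_mem (hRQ (by simpa using (hseg t ht).trans_lt hv.2))).fun_comp
        (f := fun t : ℝ => t • v) (analyticAt_id.smul analyticAt_const)
    simpa using hf_line.eqOn_of_preconnected_of_eventuallyEq hQ_line isPreconnected_Icc
      (Set.left_mem_Icc.2 zero_le_one)
      (eventuallyEq_sum_symmetrization_taylorSeriesAt hf (hlines.self_of_nhds v) hQ)
      (Set.right_mem_Icc.2 zero_le_one)
  have hsum_q : AnalyticAt ℝ (fun x => Q.sum (x - q)) q := by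
    simpa using (hsum.comp_sub q).analyticAt
  refine hsum_q.congr ?_
  filter_upwards [ball_mem_nhds q (lt_min hr hR)] with x hx
  rw [← heq (x - q) (by simpa [dist_eq_norm] using hx), add_sub_cancel]

end BochnakSiciak

/-! ### Local graphs -/

section InverseFunction

open Filter Topology

lemma exists_continuousLinearEquiv_hasFDerivAt {𝕜 E F : Type*} [NontriviallyNormedField 𝕜]
    [NormedAddCommGroup E] [NormedSpace 𝕜 E] [NormedAddCommGroup F] [NormedSpace 𝕜 F]
    {f : E → F} {g : F → E} {x : E} (hf : DifferentiableAt 𝕜 f x)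
    (hg : DifferentiableAt 𝕜 g (f x)) (hgf : ∀ᶠ z in 𝓝 x, g (f z) = z)
    (hfg : ∀ᶠ y in 𝓝 (f x), f (g y) = y) :
    ∃ A : E ≃L[𝕜] F, HasFDerivAt f (A : E →L[𝕜] F) x := by
  have hf' : HasFDerivAt f (fderiv 𝕜 f x) (g (f x)) := by
    rw [hgf.self_of_nhds]
    exact hf.hasFDerivAt
  have hgf' : (fderiv 𝕜 g (f x)).comp (fderiv 𝕜 f x) = .id 𝕜 E :=
    (hg.hasFDerivAt.comp x hf.hasFDerivAt).unique ((hasFDerivAt_id x).congr_of_eventuallyEq hgf)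
  have hfg' : (fderiv 𝕜 f x).comp (fderiv 𝕜 g (f x)) = .id 𝕜 F :=
    (hf'.comp (f x) hg.hasFDerivAt).unique ((hasFDerivAt_id (f x)).congr_of_eventuallyEq hfg)
  exact ⟨.equivOfInverse _ _ (DFunLike.congr_fun hgf') (DFunLike.congr_fun hfg'), hf.hasFDerivAt⟩

/-- The derivative remains invertible near `p`, so the local inverse is differentiable to order `m`
on a whole neighbourhood of `f p`, also for `m = ∞`. -/
lemma exists_openPartialHomeomorph_contDiffOn_symm {𝕜 E F : Type*} [RCLike 𝕜]
    [NormedAddCommGroup E] [NormedSpace 𝕜 E] [CompleteSpace E]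
    [NormedAddCommGroup F] [NormedSpace 𝕜 F] {f : E → F} {U : Set E} {p : E} {m : WithTop ℕ∞}
    {A : E ≃L[𝕜] F} (hU : IsOpen U) (hp : p ∈ U) (hf : ContDiffOn 𝕜 m f U)
    (hA : HasFDerivAt f (A : E →L[𝕜] F) p) (hm : m ≠ 0) :
    ∃ e : OpenPartialHomeomorph E F, ⇑e = f ∧ p ∈ e.source ∧ e.source ⊆ U ∧
      ContDiffOn 𝕜 m e.symm e.target := by
  have hfU : ∀ x ∈ U, ContDiffAt 𝕜 m f x := fun x hx => hf.contDiffAt (hU.mem_nhds hx)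
  let e := (hfU p hp).toOpenPartialHomeomorph f hA hm
  have hinv : ∀ᶠ x in 𝓝 p, fderiv 𝕜 f x ∈ Set.range ((↑) : (E ≃L[𝕜] F) → E →L[𝕜] F) := by
    have hcont : ContinuousAt (fderiv 𝕜 f) p := ((hfU p hp).fderiv_right (m := 0)
      (by simpa [ENat.one_le_iff_ne_zero_withTop] using hm)).continuousAt
    exact hcont.eventually (by rw [hA.fderiv]; exact ContinuousLinearEquiv.nhds A)
  obtain ⟨N, hN_inv, hN, hpN⟩ := mem_nhds_iff.1 (hinv.and (hU.mem_nhds hp))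
  refine ⟨e.restrOpen N hN, rfl, ⟨(hfU p hp).mem_toOpenPartialHomeomorph_source hA hm, hpN⟩,
    fun x hx => (hN_inv hx.2).2, fun y hy => ContDiffAt.contDiffWithinAt ?_⟩
  have hyN : e.symm y ∈ N := ((e.restrOpen N hN).map_target hy).2
  obtain ⟨⟨B, hB⟩, hyU⟩ := hN_inv hyN
  refine e.contDiffAt_symm hy.1 (f₀' := B) ?_ (hfU _ hyU)
  rw [hB]
  exact ((hfU _ hyU).differentiableAt hm).hasFDerivAt

end InverseFunction

section LocalGraph

open Filter Topology

/-- In the open set `W`, the set `X` is the image of a section `Γ` of the coordinate map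
`l : W → O`. For a linear projection `l` this says that `X` is a graph over the open set `O`. -/
structure IsLocalGraph {E F : Type*} [TopologicalSpace E] [TopologicalSpace F] (X : Set E)
    (l : E → F) (Γ : F → E) (W : Set E) (O : Set F) : Prop where
  isOpen_source : IsOpen W
  isOpen_base : IsOpen O
  mapsTo_base : Set.MapsTo l W O
  mapsTo_inter : Set.MapsTo Γ O (X ∩ W)
  left_inv : ∀ x ∈ X ∩ W, Γ (l x) = x
  right_inv : ∀ y ∈ O, l (Γ y) = y

lemma IsLocalGraph.eventually_eq {E F : Type*} [TopologicalSpace E] [TopologicalSpace F]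
    {X : Set E} {l : E → F} {Γ : F → E} {W : Set E} {O : Set F} (h : IsLocalGraph X l Γ W O)
    {y : F} (hy : y ∈ O) : ∀ᶠ x in 𝓝 (Γ y), x ∈ X → l x = y → x = Γ y := by
  filter_upwards [h.isOpen_source.mem_nhds (h.mapsTo_inter hy).2] with x hxW hxX hxy
  rw [← hxy, h.left_inv x ⟨hxX, hxW⟩]

variable {E F G : Type*} [NormedAddCommGroup E] [NormedSpace ℝ E]
  [NormedAddCommGroup F] [NormedSpace ℝ F] [NormedAddCommGroup G] [NormedSpace ℝ G]
  {X U W : Set E} {p : E} {A : E ≃L[ℝ] F × G}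

/-- Apply the inverse function theorem to `x ↦ ((A x).1, h x)`. -/
lemma exists_isLocalGraph_of_hasFDerivAt [CompleteSpace E] {h : E → G} {m : WithTop ℕ∞}
    (hU : IsOpen U) (hpU : p ∈ U) (hpX : p ∈ X) (hh : ContDiffOn ℝ m h U) (hm : m ≠ 0)
    (hA : HasFDerivAt h (.snd ℝ F G ∘L (A : E →L[ℝ] F × G)) p)
    (hX : ∀ x ∈ U, x ∈ X ↔ h x = 0) :
    ∃ (Γ : F → E) (W : Set E) (O : Set F), p ∈ W ∧
      IsLocalGraph X (fun x => (A x).1) Γ W O ∧ ContDiffOn ℝ m Γ O := by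
  obtain ⟨e, he, hpe, heU, he_symm⟩ := exists_openPartialHomeomorph_contDiffOn_symm
    (f := fun x => ((A x).1, h x)) (A := A) (m := m) hU hpU
    ((contDiff_fst.comp A.contDiff).contDiffOn.prodMk hh)
    (((ContinuousLinearMap.fst ℝ F G).hasFDerivAt.comp p A.hasFDerivAt).prodMk hA) hm
  let s : F → F × G := fun y => (y, 0)
  have hs : Continuous s := by fun_prop
  have heX : ∀ x ∈ e.source, x ∈ X ↔ e x = s (A x).1 := fun x hx => by
    simp [hX x (heU hx), he, s]
  have he_right : ∀ y, s y ∈ e.target → ((A (e.symm (s y))).1, h (e.symm (s y))) = s y :=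
    fun y hy => by simpa only [he] using e.right_inv hy
  have hO : IsOpen (s ⁻¹' e.target) := e.open_target.preimage hs
  refine ⟨e.symm ∘ s, e.source ∩ (fun x => (A x).1) ⁻¹' (s ⁻¹' e.target), s ⁻¹' e.target,
    ⟨hpe, ?_⟩, ⟨?_, hO, fun x hx => hx.2, fun y hy => ?_, fun x hx => ?_, fun y hy => ?_⟩, ?_⟩
  · rw [Set.mem_preimage, Set.mem_preimage, ← (heX p hpe).1 hpX]
    exact e.map_source hpe
  · exact e.open_source.inter (hO.preimage (by fun_prop))
  · have hy_fst : (A (e.symm (s y))).1 = y := congrArg Prod.fst (he_right y hy)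
    refine ⟨(heX _ (e.map_target hy)).2 ?_, e.map_target hy, ?_⟩
    · exact (e.right_inv hy).trans (congrArg s hy_fst.symm)
    · simpa only [Set.mem_preimage, Function.comp_apply, hy_fst] using hy
  · rw [Function.comp_apply, ← (heX x hx.2.1).1 hx.1, e.left_inv hx.2.1]
  · exact congrArg Prod.fst (he_right y hy)
  · exact he_symm.comp (contDiff_prodMk_left 0).contDiffOn fun y hy => hy

/-- Shear the linear coordinates `A` along the graph. -/
lemma IsLocalGraph.exists_equiv_analyticOnNhd {Γ : F → E} {O : Set F}
    (h : IsLocalGraph X (fun x => (A x).1) Γ W O) (hΓ : AnalyticOnNhd ℝ Γ O) :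
    ∃ χ : E ≃ F × G, IsOpen (χ '' W) ∧ AnalyticOnNhd ℝ χ W ∧
      AnalyticOnNhd ℝ χ.symm (χ '' W) ∧ ∀ x ∈ W, x ∈ X ↔ (χ x).2 = 0 := by
  let τ : F → G := fun y => (A (Γ y)).2
  let χ : E ≃ F × G := A.toEquiv.trans ((Equiv.refl F).prodShear fun y => Equiv.subRight (τ y))
  have hχ (x : E) : χ x = ((A x).1, (A x).2 - τ (A x).1) := rfl
  have hχ_symm (y : F × G) : χ.symm y = A.symm (y.1, y.2 + τ y.1) := rfl
  have hτ : AnalyticOnNhd ℝ τ O := fun y hy => analyticAt_snd.comp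
    ((A.toContinuousLinearMap.analyticAt _).comp (hΓ y hy))
  have hχ_symm_an : ∀ y : F × G, y.1 ∈ O → AnalyticAt ℝ χ.symm y := fun y hy =>
    (A.symm.toContinuousLinearMap.analyticAt _).comp
      (analyticAt_fst.prod (analyticAt_snd.add ((hτ _ hy).comp analyticAt_fst)))
  have himage : χ '' W = Prod.fst ⁻¹' O ∩ χ.symm ⁻¹' W := by
    rw [Equiv.image_eq_preimage_symm, Set.inter_eq_right.2]
    intro y hy
    simpa [hχ_symm] using h.mapsTo_base hy
  refine ⟨χ, ?_, fun x hx => ?_, fun y hy => ?_, fun x hx => ?_⟩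
  · rw [himage]
    exact ContinuousOn.isOpen_inter_preimage
      (fun y hy => (hχ_symm_an y hy).continuousAt.continuousWithinAt)
      (h.isOpen_base.preimage continuous_fst) h.isOpen_source
  · have hshear : AnalyticAt ℝ (fun y : F × G => (y.1, y.2 - τ y.1)) (A x) :=
      analyticAt_fst.prod
        (analyticAt_snd.sub ((hτ _ (h.mapsTo_base hx)).comp_of_eq analyticAt_fst rfl))
    exact hshear.comp (A.toContinuousLinearMap.analyticAt x)
  · exact hχ_symm_an y (himage ▸ hy).1
  · have hgraph : (A (Γ (A x).1)).1 = (A x).1 := h.right_inv _ (h.mapsTo_base hx)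
    have hiff : (χ x).2 = 0 ↔ Γ (A x).1 = x := by
      rw [← A.injective.eq_iff, Prod.ext_iff, hχ, sub_eq_zero]
      simp [hgraph, τ, eq_comm]
    rw [hiff]
    exact ⟨fun hxX => h.left_inv x ⟨hxX, hx⟩, fun hx_eq =>
      hx_eq ▸ (h.mapsTo_inter (h.mapsTo_base hx)).1⟩

end LocalGraph

/-! ### Manifold points of real algebraic sets -/

section AlgebraicGraph

open Polynomial Filter Topology
open scoped ContDiff

lemma mem_realFiber_iff_le_ker {σ R : Type*} [CommRing R] {J : Ideal (MvPolynomial σ R)}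
    {φ : R →+* ℝ} {x : σ → ℝ} :
    x ∈ realFiber J φ ↔ J ≤ RingHom.ker (MvPolynomial.eval₂Hom φ x) :=
  Iff.rfl

lemma exists_ideal_realFiber_evalRingHom {σ τ : Type*} [Finite σ]
    (I : Ideal (MvPolynomial σ ℝ)) (l : (σ → ℝ) →ₗ[ℝ] τ → ℝ) (a v : τ → ℝ) :
    ∃ J : Ideal (MvPolynomial σ ℝ[X]), ∀ t x, x ∈ realFiber J (evalRingHom t) ↔
      x ∈ realFiber I (.id ℝ) ∧ l x = a + t • v := by
  classical
  have := Fintype.ofFinite σ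
  let M := LinearMap.toMatrix' l
  let affine (i : τ) : MvPolynomial σ ℝ[X] :=
    (M.toMvPolynomial i).map C - MvPolynomial.C (C (a i) + C (v i) * X)
  have hcomp (t : ℝ) (x : σ → ℝ) : (MvPolynomial.eval₂Hom (evalRingHom t) x).comp
      (MvPolynomial.map C) = MvPolynomial.eval₂Hom (.id ℝ) x := by
    ext <;> simp
  have haffine (t : ℝ) (x : σ → ℝ) (i : τ) :
      MvPolynomial.eval₂Hom (evalRingHom t) x (affine i) = l x i - (a i + v i * t) := by
    have hM : MvPolynomial.eval₂Hom (.id ℝ) x (M.toMvPolynomial i) = l x i := by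
      rw [← LinearMap.toMatrix'_mulVec, ← Matrix.toMvPolynomial_eval_eq_apply]
      rfl
    rw [map_sub, ← RingHom.comp_apply, hcomp, hM]
    simp
  refine ⟨I.map (MvPolynomial.map C) ⊔ Ideal.span (Set.range affine), fun t x => ?_⟩
  rw [mem_realFiber_iff_le_ker, sup_le_iff, Ideal.map_le_iff_le_comap, RingHom.comap_ker, hcomp,
    Ideal.span_le, Set.range_subset_iff, mem_realFiber_iff_le_ker]
  refine and_congr_right fun _ => ?_
  simp only [SetLike.mem_coe, RingHom.mem_ker, haffine, sub_eq_zero, funext_iff, Pi.add_apply,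
    Pi.smul_apply, smul_eq_mul, mul_comm]

variable {σ τ : Type*} [Fintype σ] [Fintype τ] {I : Ideal (MvPolynomial σ ℝ)}
  {l : (σ → ℝ) →ₗ[ℝ] τ → ℝ} {Γ : (τ → ℝ) → σ → ℝ} {W : Set (σ → ℝ)} {O : Set (τ → ℝ)}

/-- The points `Γ (a + t • v)` are isolated in the fibres of a polynomial family over `ℝ[t]`, so
their coordinates are algebraic functions of `t`. -/
lemma IsLocalGraph.analyticAt_line (h : IsLocalGraph (realFiber I (.id ℝ)) l Γ W O)
    (hΓ : ContDiffOn ℝ ∞ Γ O) {a : τ → ℝ} (ha : a ∈ O) (v : τ → ℝ) :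
    AnalyticAt ℝ (fun t : ℝ => Γ (a + t • v)) 0 := by
  obtain ⟨J, hJ⟩ := exists_ideal_realFiber_evalRingHom I l a v
  refine analyticAt_pi_iff.2 fun j => ?_
  obtain ⟨P, hP, hP_zero⟩ :=
    exists_eval₂_eq_zero_of_isolated_realFiber (IsNoetherian.noetherian J) j
  have hline : ∀ᶠ t : ℝ in 𝓝 0, a + t • v ∈ O :=
    (tendsto_add_smul_nhds_zero a v).eventually (h.isOpen_base.mem_nhds ha)
  have hsmooth : ContDiffAt ℝ ∞ (fun t : ℝ => Γ (a + t • v) j) 0 := by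
    have hΓa : ContDiffAt ℝ ∞ Γ (a + (0 : ℝ) • v) := by
      simpa using hΓ.contDiffAt (h.isOpen_base.mem_nhds ha)
    exact contDiffAt_pi.1 (hΓa.comp 0 (by fun_prop)) j
  refine analyticAt_of_algebraic hP (fun K => exists_polynomial_sub_eval_isLittleO
    (hsmooth.of_le (by exact_mod_cast le_top))) (nhdsWithin_le_nhds ?_)
  filter_upwards [hline] with t ht
  rw [← eval₂_evalRingHom]
  refine hP_zero _ _ ((hJ t _).2 ⟨(h.mapsTo_inter ht).1, h.right_inv _ ht⟩) ?_
  filter_upwards [h.eventually_eq ht] with x hx hxJ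
  exact hx ((hJ t x).1 hxJ).1 ((hJ t x).1 hxJ).2

lemma IsLocalGraph.analyticOnNhd (h : IsLocalGraph (realFiber I (.id ℝ)) l Γ W O)
    (hΓ : ContDiffOn ℝ ∞ Γ O) : AnalyticOnNhd ℝ Γ O := fun y hy => by
  have hO := h.isOpen_base.mem_nhds hy
  refine analyticAt_of_analyticAt_lines (hΓ.contDiffAt hO) ?_
  filter_upwards [hO] with a ha using h.analyticAt_line hΓ ha

end AlgebraicGraph

section ManifoldPoints

open scoped ContDiff

/-- The splitting of `ℝⁿ` into the coordinates with index (starting from `0`) less than `d` and the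
remaining ones. -/
def splitCoordinates (n d : ℕ) : (Fin n → ℝ) ≃L[ℝ]
    ({i : Fin n // (i : ℕ) < d} → ℝ) × ({i : Fin n // ¬ (i : ℕ) < d} → ℝ) where
  toEquiv := Equiv.piEquivPiSubtypeProd (fun i : Fin n => (i : ℕ) < d) fun _ => ℝ
  map_add' _ _ := rfl
  map_smul' _ _ := rfl
  continuous_toFun := (Homeomorph.piEquivPiSubtypeProd (fun i : Fin n => (i : ℕ) < d)
    fun _ => ℝ).continuous
  continuous_invFun := (Homeomorph.piEquivPiSubtypeProd (fun i : Fin n => (i : ℕ) < d)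
    fun _ => ℝ).symm.continuous

lemma splitCoordinates_snd_eq_zero_iff {n d : ℕ} {x : Fin n → ℝ} :
    (splitCoordinates n d x).2 = 0 ↔ ∀ i : Fin n, d ≤ (i : ℕ) → x i = 0 := by
  simp only [funext_iff, Subtype.forall, not_lt]
  rfl

variable {n : ℕ} {X W : Set (Fin n → ℝ)} {p : Fin n → ℝ}

lemma IsSmoothManifoldPointAt.exists_isLocalGraph (h : IsSmoothManifoldPointAt X p)
    (hp : p ∈ X) :
    ∃ (d : ℕ) (A : (Fin n → ℝ) ≃L[ℝ]
        ({i : Fin n // (i : ℕ) < d} → ℝ) × ({i : Fin n // ¬ (i : ℕ) < d} → ℝ))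
      (Γ : ({i : Fin n // (i : ℕ) < d} → ℝ) → Fin n → ℝ) (W : Set (Fin n → ℝ))
      (O : Set ({i : Fin n // (i : ℕ) < d} → ℝ)), p ∈ W ∧
      IsLocalGraph X (fun x => (A x).1) Γ W O ∧ ContDiffOn ℝ ∞ Γ O := by
  obtain ⟨d, U, V, φ, ψ, hU, hV, hpU, hφ, hψ, hUV, -, hψφ, hφψ, hXU⟩ := h
  obtain ⟨L, hL⟩ := exists_continuousLinearEquiv_hasFDerivAt
    ((hφ.contDiffAt (hU.mem_nhds hpU)).differentiableAt (by simp))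
    ((hψ.contDiffAt (hV.mem_nhds (hUV hpU))).differentiableAt (by simp))
    (Filter.eventually_of_mem (hU.mem_nhds hpU) hψφ)
    (Filter.eventually_of_mem (hV.mem_nhds (hUV hpU)) hφψ)
  let e := splitCoordinates n d
  have hXφ : ∀ x ∈ U, x ∈ X ↔ (e (φ x)).2 = 0 := fun x hx => by
    rw [splitCoordinates_snd_eq_zero_iff]
    simpa [hx] using Set.ext_iff.1 hXU x
  exact ⟨d, L.trans e, exists_isLocalGraph_of_hasFDerivAt (m := ∞) hU hpU hp
    ((contDiff_snd.comp e.contDiff).comp_contDiffOn hφ) (by simp)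
    ((hasFDerivAt_snd.comp (φ p) e.hasFDerivAt).comp p hL) hXφ⟩

lemma isAnalyticManifoldPointAt_of_equiv {d : ℕ}
    {χ : (Fin n → ℝ) ≃ ({i : Fin n // (i : ℕ) < d} → ℝ) × ({i : Fin n // ¬ (i : ℕ) < d} → ℝ)}
    (hW : IsOpen W) (hp : p ∈ W) (hχW : IsOpen (χ '' W)) (hχ : AnalyticOnNhd ℝ χ W)
    (hχ_symm : AnalyticOnNhd ℝ χ.symm (χ '' W)) (hX : ∀ x ∈ W, x ∈ X ↔ (χ x).2 = 0) :
    IsAnalyticManifoldPointAt X p := by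
  let e := splitCoordinates n d
  refine ⟨d, W, e ⁻¹' (χ '' W), e.symm ∘ χ, χ.symm ∘ e, hW, hχW.preimage e.continuous, hp,
    fun x hx => (e.symm.toContinuousLinearMap.analyticAt _).comp (hχ x hx),
    fun y hy => (hχ_symm _ hy).comp (e.toContinuousLinearMap.analyticAt y),
    fun x hx => ⟨x, hx, by simp⟩, ?_, by simp, by simp, ?_⟩
  · rintro y ⟨x, hx, hxy⟩
    simpa [← hxy] using hx
  · ext x
    rw [Set.mem_inter_iff, Set.mem_sep_iff, and_comm]
    refine and_congr_right fun hx => ?_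
    rw [hX x hx, ← splitCoordinates_snd_eq_zero_iff, Function.comp_apply, e.apply_symm_apply]

lemma realZeroSet_eq_realFiber (I : Ideal (MvPolynomial (Fin n) ℝ)) :
    realZeroSet I = realFiber I (.id ℝ) := by
  simp only [realZeroSet, realFiber, MvPolynomial.aeval_def, Algebra.algebraMap_self]

end ManifoldPoints

/-- **Analytic = smooth manifold points of real algebraic sets.**
Let `X = V_ℝ(I) ⊆ ℝⁿ` be a real algebraic set and `p ∈ X`.  Then `p` is an analytic
manifold point of `X` if and only if `p` is a smooth manifold point of `X`. -/
theorem analytic_iff_smooth_manifold_point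
    (n : ℕ) (I : Ideal (MvPolynomial (Fin n) ℝ)) (p : Fin n → ℝ)
    (hp : p ∈ realZeroSet I) :
    IsAnalyticManifoldPointAt (realZeroSet I) p ↔
      IsSmoothManifoldPointAt (realZeroSet I) p := by
  constructor
  · rintro ⟨d, U, V, φ, ψ, hU, hV, hpU, hφ, hψ, hchart⟩
    exact ⟨d, U, V, φ, ψ, hU, hV, hpU, hφ.contDiffOn hU.uniqueDiffOn,
      hψ.contDiffOn hV.uniqueDiffOn, hchart⟩
  · intro hsmooth
    obtain ⟨d, A, Γ, W, O, hpW, hgraph, hΓ⟩ := hsmooth.exists_isLocalGraph hp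
    have hΓ_an : AnalyticOnNhd ℝ Γ O := by
      rw [realZeroSet_eq_realFiber] at hgraph
      exact IsLocalGraph.analyticOnNhd (l := LinearMap.fst ℝ _ _ ∘ₗ A.toLinearMap) hgraph hΓ
    obtain ⟨χ, hχW, hχ, hχ_symm, hX⟩ := hgraph.exists_equiv_analyticOnNhd hΓ_an
    exact isAnalyticManifoldPointAt_of_equiv hgraph.isOpen_source hpW hχW hχ hχ_symm hX
end

section
/- Let q ≤ ℝ[[x₁,…,xₙ]] be a prime ideal of the formal power series ring of height n−1. Then the real radical of q equals q if q is real, and equals the maximal ideal ⟨x₁,…,xₙ⟩ of ℝ[[x₁,…,xₙ]] if q is not real. -/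
/-!
An ideal is real exactly when it equals its real radical, and the kernel of a map to a formally
real ring is real. In a local ring `A` whose maximal ideal `m` is real, this bounds every real
radical of a proper ideal `q`: `√ʳq ⊆ √ʳm = m`. If `q` is not real, some `y ∈ √ʳq` lies outside
`q`. The relation `y^(2r) + ∑ bᵢ² ∈ q`, multiplied by `c^(2r)`, shows that `√ʳq` also contains every
`x` with `x^s ≡ c y` modulo `q`, that is, the radical of `q + (y)`. When `q` is prime with
`dim A/q ≤ 1`, the only prime containing `q + (y)` is `m`, so `√ʳq = m`.

The maximal ideal of `ℝ[[x₁,…,xₙ]]` is the kernel of the constant coefficient and is generated by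
the `n` variables, so Krull's height theorem bounds the dimension by `n`, and a prime of height
`n - 1` has coheight at most `1`.
-/

open scoped BigOperators

/-- A commutative ring `B` is *(formally) real* if every equation
`b₁² + … + b_k² = 0` with `bᵢ ∈ B` implies `b₁ = … = b_k = 0`. -/
def IsRealRing (B : Type*) [CommRing B] : Prop :=
  ∀ (k : ℕ) (b : Fin k → B), ∑ i, b i ^ 2 = 0 → ∀ i, b i = 0

/-- An ideal `I ≤ B` is *real* if the quotient `B/I` is a real ring. -/
def Ideal.IsRealIdeal {B : Type*} [CommRing B] (I : Ideal B) : Prop :=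
  IsRealRing (B ⧸ I)

/-- The *real radical* of an ideal `I ≤ B`:
`√ʳI = { x ∈ B : x^(2r) + b₁² + … + b_k² ∈ I for some r, k ≥ 0 and bᵢ ∈ B }`. -/
def realRadical {B : Type*} [CommRing B] (I : Ideal B) : Set B :=
  { x | ∃ (r k : ℕ) (b : Fin k → B), x ^ (2 * r) + ∑ i, b i ^ 2 ∈ I }

section RealRadical

variable {A B : Type*} [CommRing A] [CommRing B]

lemma isRealRing_of_isFormallyReal [IsFormallyReal B] : IsRealRing B := by
  intro k b hb i
  rw [← Finset.add_sum_erase _ _ (Finset.mem_univ i)] at hb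
  exact pow_eq_zero_iff two_ne_zero |>.1 <| IsFormallyReal.eq_zero_of_add_right
    (IsSquare.sq (b i)).isSumSq (IsSumSq.sum_sq _ b) hb

lemma IsRealRing.isReduced (hB : IsRealRing B) : IsReduced B :=
  (isReduced_iff_pow_one_lt 2 one_lt_two).2 fun x hx => hB 1 (fun _ => x) (by simpa using hx) 0

lemma isRealIdeal_iff {I : Ideal B} :
    I.IsRealIdeal ↔ ∀ (k : ℕ) (b : Fin k → B), ∑ i, b i ^ 2 ∈ I → ∀ i, b i ∈ I := by
  have hmk (k : ℕ) : Function.Surjective fun b : Fin k → B => Ideal.Quotient.mk I ∘ b :=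
    Ideal.Quotient.mk_surjective.comp_left
  simp only [Ideal.IsRealIdeal, IsRealRing, (hmk _).forall, Function.comp_apply, ← map_pow,
    ← map_sum, Ideal.Quotient.eq_zero_iff_mem]

lemma isRealIdeal_ker (f : A →+* B) (hB : IsRealRing B) : (RingHom.ker f).IsRealIdeal :=
  isRealIdeal_iff.2 fun k b hb => hB k (f ∘ b) (by simpa using hb)

lemma subset_realRadical (I : Ideal B) : (I : Set B) ⊆ realRadical I := fun x hx =>
  ⟨1, 0, Fin.elim0, by simpa using I.pow_mem_of_mem hx 2 two_pos⟩

lemma realRadical_mono {I J : Ideal B} (h : I ≤ J) : realRadical I ⊆ realRadical J :=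
  fun _ ⟨r, k, b, hx⟩ => ⟨r, k, b, h hx⟩

lemma realRadical_eq_of_isRealIdeal {I : Ideal B} (hI : I.IsRealIdeal) :
    realRadical I = I := by
  refine Set.Subset.antisymm ?_ (subset_realRadical I)
  rintro x ⟨r, k, b, hx⟩
  have hpow : x ^ r ∈ I := by
    refine isRealIdeal_iff.1 hI (k + 1) (Fin.cons (x ^ r) b) ?_ 0
    simpa [Fin.sum_univ_succ, ← pow_mul, mul_comm r] using hx
  exact I.isRadical_iff_quotient_reduced.2 (IsRealRing.isReduced hI) ⟨r, hpow⟩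

lemma isRealIdeal_of_realRadical_subset {I : Ideal B} (hI : realRadical I ⊆ I) :
    I.IsRealIdeal := by
  refine isRealIdeal_iff.2 fun k b hb i => hI ?_
  obtain _ | k := k
  · exact i.elim0
  · exact ⟨1, k, fun j => b (i.succAbove j), by rwa [mul_one, ← Fin.sum_univ_succAbove (b · ^ 2) i]⟩

lemma radical_span_singleton_sup_subset_realRadical {I : Ideal B} {y : B}
    (hy : y ∈ realRadical I) :
    ((Ideal.span {y} ⊔ I).radical : Set B) ⊆ realRadical I := by
  obtain ⟨r, k, b, hb⟩ := hy
  rintro x ⟨s, hs⟩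
  obtain ⟨c, a, ha, hx⟩ := Ideal.mem_span_singleton_sup.1 hs
  refine ⟨s * r, k, fun i => c ^ r * b i, ?_⟩
  have hdiff : (x ^ s) ^ (2 * r) - (c * y) ^ (2 * r) ∈ I :=
    I.mem_of_dvd (sub_dvd_pow_sub_pow _ _ _) (by rwa [← hx, add_sub_cancel_left])
  have hsplit : x ^ (2 * (s * r)) + ∑ i, (c ^ r * b i) ^ 2 =
      ((x ^ s) ^ (2 * r) - (c * y) ^ (2 * r)) + c ^ (2 * r) * (y ^ (2 * r) + ∑ i, b i ^ 2) := by
    simp only [mul_pow, ← Finset.mul_sum]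
    ring
  rw [hsplit]
  exact add_mem hdiff (I.mul_mem_left _ hb)

end RealRadical

section PowerSeries

open MvPowerSeries IsLocalRing

variable {σ R K : Type*} [CommRing R] [Field K]

lemma mem_span_X_image_of_coeff_eq_zero (s : Finset σ) {f : MvPowerSeries σ R}
    (hf : ∀ e : σ →₀ ℕ, (∀ i ∈ s, e i = 0) → coeff e f = 0) :
    f ∈ Ideal.span ((X : σ → MvPowerSeries σ R) '' s) := by
  classical
  induction s using Finset.induction_on generalizing f with
  | empty =>
    have : f = 0 := ext fun e => by simpa using hf e
    simp [this]
  | insert i s _ ih =>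
    let g : MvPowerSeries σ R := fun e => if e i = 0 then coeff e f else 0
    have hg (e : σ →₀ ℕ) : coeff e g = if e i = 0 then coeff e f else 0 := rfl
    have hdvd : X i ∣ f - g := X_dvd_iff.2 fun e he => by simp [hg, he]
    have hgs : g ∈ Ideal.span (X '' (s : Set σ)) := ih fun e he => by
      rw [hg, ite_eq_right_iff]
      exact fun hei => hf e (Finset.forall_mem_insert .. |>.2 ⟨hei, he⟩)
    rw [Finset.coe_insert, Set.image_insert_eq, ← sub_add_cancel f g]
    exact add_mem (Ideal.mem_of_dvd _ hdvd (Ideal.subset_span (Set.mem_insert _ _)))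
      (Ideal.span_mono (Set.subset_insert _ _) hgs)

lemma ker_constantCoeff_eq_span_range_X [Finite σ] :
    RingHom.ker (constantCoeff (σ := σ) (R := R)) = Ideal.span (Set.range X) := by
  have := Fintype.ofFinite σ
  refine le_antisymm (fun f hf => ?_) (Ideal.span_le.2 ?_)
  · rw [← Set.image_univ, ← Finset.coe_univ]
    refine mem_span_X_image_of_coeff_eq_zero _ fun e he => ?_
    obtain rfl : e = 0 := Finsupp.ext fun i => he i (Finset.mem_univ i)
    exact hf
  · rintro _ ⟨i, rfl⟩
    exact constantCoeff_X i

lemma ker_constantCoeff_eq_maximalIdeal :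
    RingHom.ker (constantCoeff (σ := σ) (R := K)) = maximalIdeal (MvPowerSeries σ K) :=
  ker_eq_maximalIdeal _ fun a => ⟨C a, constantCoeff_C a⟩

lemma isRealIdeal_maximalIdeal_mvPowerSeries (hK : IsRealRing K) :
    (maximalIdeal (MvPowerSeries σ K)).IsRealIdeal :=
  ker_constantCoeff_eq_maximalIdeal (σ := σ) (K := K) ▸ isRealIdeal_ker _ hK

lemma ringKrullDim_mvPowerSeries_le [Finite σ] :
    ringKrullDim (MvPowerSeries σ K) ≤ Nat.card σ := by
  refine (ringKrullDim_le_spanFinrank_maximalIdeal _).trans (Nat.cast_le.2 ?_)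
  rw [← ker_constantCoeff_eq_maximalIdeal, ker_constantCoeff_eq_span_range_X]
  exact (Submodule.spanFinrank_span_le_ncard_of_finite (Set.finite_range X)).trans
    (Finite.card_range_le X)

end PowerSeries

lemma coheight_le_of_sub_le_height {α : Type*} [Preorder α] {x : α} {n k : ℕ}
    (hdim : Order.krullDim α ≤ n) (hx : (n - k : ℕ) ≤ Order.height x) :
    Order.coheight x ≤ k := by
  have : Nonempty α := ⟨x⟩
  rw [Order.krullDim_eq_iSup_height_add_coheight_of_nonempty] at hdim
  have hsum : Order.height x + Order.coheight x ≤ n :=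
    (le_iSup (fun a : α => Order.height a + Order.coheight a) x).trans (by exact_mod_cast hdim)
  refine (ENat.add_le_add_iff_left (ENat.natCast_ne_top (n - k))).1 ?_
  calc ((n - k : ℕ) : ℕ∞) + Order.coheight x
    _ ≤ Order.height x + Order.coheight x := by gcongr
    _ ≤ n := hsum
    _ ≤ (n - k : ℕ) + k := by exact_mod_cast le_tsub_add

section LocalRing

open IsLocalRing

variable {A : Type*} [CommRing A] [IsLocalRing A]

lemma realRadical_subset_maximalIdeal (hA : (maximalIdeal A).IsRealIdeal) {I : Ideal A}
    (hI : I ≠ ⊤) : realRadical I ⊆ maximalIdeal A :=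
  (realRadical_mono (le_maximalIdeal hI)).trans (realRadical_eq_of_isRealIdeal hA).subset

lemma eq_maximalIdeal_of_coheight_le_one {q p : PrimeSpectrum A} (hq : Order.coheight q ≤ 1)
    (hqp : q < p) : p.asIdeal = maximalIdeal A := by
  have hp : Order.coheight p = 0 := Order.lt_one_iff.1 <| by
    exact_mod_cast Order.coheight_le_coe_iff.1 (by exact_mod_cast hq) p hqp
  exact eq_maximalIdeal (PrimeSpectrum.isMax_iff.1 (Order.coheight_eq_zero.1 hp))

lemma maximalIdeal_le_radical_span_singleton_sup {q : PrimeSpectrum A}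
    (hq : Order.coheight q ≤ 1) {y : A} (hy : y ∉ q.asIdeal) :
    maximalIdeal A ≤ (Ideal.span {y} ⊔ q.asIdeal).radical := by
  rw [Ideal.radical_eq_sInf]
  refine le_sInf fun p ⟨hle, hp⟩ => ?_
  obtain ⟨hyp, hqp⟩ := sup_le_iff.1 hle
  have hlt : q < ⟨p, hp⟩ := hqp.lt_of_not_ge fun hpq =>
    hy (hpq ((Ideal.span_singleton_le_iff_mem p).1 hyp))
  exact (eq_maximalIdeal_of_coheight_le_one hq hlt).ge

theorem real_radical_of_height_prime_of_powerseries_general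
    (hA : (maximalIdeal A).IsRealIdeal) (q : PrimeSpectrum A) (hq : Order.coheight q ≤ 1) :
    (q.asIdeal.IsRealIdeal → realRadical q.asIdeal = q.asIdeal) ∧
    (¬ q.asIdeal.IsRealIdeal → realRadical q.asIdeal = maximalIdeal A) := by
  refine ⟨realRadical_eq_of_isRealIdeal, fun hreal => Set.Subset.antisymm
    (realRadical_subset_maximalIdeal hA q.isPrime.ne_top) ?_⟩
  obtain ⟨y, hy, hyq⟩ := Set.not_subset.1 (mt isRealIdeal_of_realRadical_subset hreal)
  exact (SetLike.coe_subset_coe.2 (maximalIdeal_le_radical_span_singleton_sup hq hyq)).trans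
    (radical_span_singleton_sup_subset_realRadical hy)

end LocalRing

/-- **Real radicals of height `n−1` primes of `ℝ[[x₁,…,xₙ]]`.**
Let `q` be a prime ideal of the formal power series ring `ℝ[[x₁,…,xₙ]]` of height
`n − 1`.  Then `√ʳq = q` if `q` is real, and `√ʳq` is the maximal ideal `⟨x₁,…,xₙ⟩`
(the series with zero constant term) if `q` is not real. -/
theorem real_radical_of_height_prime_of_powerseries
    (n : ℕ) (q : Ideal (MvPowerSeries (Fin n) ℝ)) (hq : q.IsPrime)
    (hht : Order.height (⟨q, hq⟩ : PrimeSpectrum (MvPowerSeries (Fin n) ℝ))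
      = ((n - 1 : ℕ) : ℕ∞)) :
    (q.IsRealIdeal → realRadical q = (q : Set (MvPowerSeries (Fin n) ℝ))) ∧
    (¬ q.IsRealIdeal → realRadical q =
      (IsLocalRing.maximalIdeal (MvPowerSeries (Fin n) ℝ) :
        Set (MvPowerSeries (Fin n) ℝ))) := by
  have hdim : ringKrullDim (MvPowerSeries (Fin n) ℝ) ≤ n := by
    simpa using ringKrullDim_mvPowerSeries_le (σ := Fin n) (K := ℝ)
  exact real_radical_of_height_prime_of_powerseries_general
    (isRealIdeal_maximalIdeal_mvPowerSeries isRealRing_of_isFormallyReal) ⟨q, hq⟩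
    (coheight_le_of_sub_le_height hdim hht.ge)
end

section
/- Let l₂, l₃, l₄ be positive real numbers with l₂ ≠ 2, and let I = ⟨ x² + y² − l₂², (u − 2)² + v² − l₃², (u − x)² + (v − y)² − l₄² ⟩ ≤ ℝ[x, y, u, v]. Then the Krull dimension of ℝ[x, y, u, v]/I equals 1. -/
/-!
Let `J` be generated by the closure equations of a four-bar linkage over a field `K` of
characteristic other than two, with ground bar of length `d ≠ 0` and other bars of squared lengths
`a, b, c`, and let `A = K[x, y, u, v]/J`.

*Upper bound.* The relations `y² = a - x²` and `v² = b - (u - d)²` make `A` integral over the image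
of `K[x, u]`. Subtracting the first two equations from the third gives `2 v y = α` with
`α = 2u(d - x) + a + b - c - d²`, so `N = α² - 4 (a - x²)(b - (u - d)²)` vanishes in `A`. The term
`-8 d x u²` shows `N ≠ 0`, whence `dim A ≤ dim K[x, u] - 1 = 1`.

*Lower bound.* Over an algebraically closed field the linkage has a configuration with its crank
along the ground line, so `J` lies in a maximal ideal. That ideal has height `4` and `J` has three
generators, so Krull's height theorem gives `4 ≤ dim A + 3`.
-/

/-- The ideal of constraint equations of the planar four-bar mechanism with ground bar
of length `2` and bar lengths `l₂, l₃, l₄`, in `ℝ[x, y, u, v]` (variables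
`X 0 = x`, `X 1 = y`, `X 2 = u`, `X 3 = v`):
`I = ⟨ x² + y² − l₂², (u − 2)² + v² − l₃², (u − x)² + (v − y)² − l₄² ⟩`. -/
noncomputable def fourBarIdeal (l₂ l₃ l₄ : ℝ) : Ideal (MvPolynomial (Fin 4) ℝ) :=
  Ideal.span
    { MvPolynomial.X 0 ^ 2 + MvPolynomial.X 1 ^ 2 - MvPolynomial.C (l₂ ^ 2),
      (MvPolynomial.X 2 - MvPolynomial.C 2) ^ 2 + MvPolynomial.X 3 ^ 2
        - MvPolynomial.C (l₃ ^ 2),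
      (MvPolynomial.X 2 - MvPolynomial.X 0) ^ 2
        + (MvPolynomial.X 3 - MvPolynomial.X 1) ^ 2 - MvPolynomial.C (l₄ ^ 2) }

open MvPolynomial

section KrullDimension

lemma ringKrullDim_le_of_isIntegral_s8 {R S : Type*} [CommRing R] [CommRing S] {f : R →+* S}
    (hf : f.IsIntegral) : ringKrullDim S ≤ ringKrullDim R := by
  algebraize [f]
  exact Order.krullDim_le_of_strictMono (PrimeSpectrum.comap f) fun p q hpq =>
    Ideal.IsIntegral.comap_lt_comap (R := R) (I := p.asIdeal) (J := q.asIdeal) hpq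

lemma ringKrullDim_succ_le_of_isIntegral {R S : Type*} [CommRing R] [CommRing S] {f : R →+* S}
    (hf : f.IsIntegral) {r : R} (hr : r ∈ nonZeroDivisors R) (hfr : f r = 0) :
    ringKrullDim S + 1 ≤ ringKrullDim R := by
  have hker : Ideal.span {r} ≤ RingHom.ker f := (Ideal.span_singleton_le_iff_mem _).mpr hfr
  have hlift : (Ideal.Quotient.lift (Ideal.span {r}) f hker).IsIntegral := fun s =>
    RingHom.IsIntegralElem.of_comp (f := Ideal.Quotient.mk (Ideal.span {r})) (hf s)
  calc ringKrullDim S + 1 ≤ ringKrullDim (R ⧸ Ideal.span {r}) + 1 := by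
        gcongr
        exact ringKrullDim_le_of_isIntegral_s8 hlift
    _ ≤ ringKrullDim R := ringKrullDim_quotient_succ_le_of_nonZeroDivisor hr

lemma isIntegral_of_adjoin_eq_top {K R S : Type*} [CommRing K] [CommRing R] [CommRing S]
    [Algebra K R] [Algebra K S] (f : R →ₐ[K] S) {s : Set S} (hs : Algebra.adjoin K s = ⊤)
    (hf : ∀ x ∈ s, (f : R →+* S).IsIntegralElem x) : (f : R →+* S).IsIntegral := by
  intro x
  have hx : x ∈ Algebra.adjoin K s := hs ▸ Algebra.mem_top
  induction hx using Algebra.adjoin_induction with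
  | mem x hx => exact hf x hx
  | algebraMap k => exact f.commutes k ▸ (f : R →+* S).isIntegralElem_map
  | add x y _ _ hx hy => exact hx.add _ hy
  | mul x y _ _ hx hy => exact hx.mul _ hy

lemma aeval_mk_X {K σ : Type*} [CommRing K] (I : Ideal (MvPolynomial σ K)) :
    aeval (fun i => Ideal.Quotient.mk I (X i)) = Ideal.Quotient.mkₐ K I :=
  algHom_ext fun _ => aeval_X _ _

lemma adjoin_range_mk_X_eq_top {K σ : Type*} [CommRing K] (I : Ideal (MvPolynomial σ K)) :
    Algebra.adjoin K (Set.range fun i => Ideal.Quotient.mk I (X i)) = ⊤ := by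
  rw [Algebra.adjoin_range_eq_range_aeval, aeval_mk_X, AlgHom.range_eq_top]
  exact Ideal.Quotient.mkₐ_surjective K I

lemma height_eq_card_of_isMaximal_mvPolynomial {K σ : Type*} [Field K] [Finite σ]
    (M : Ideal (MvPolynomial σ K)) [hM : M.IsMaximal] : M.height = Nat.card σ := by
  induction σ using Finite.induction_empty_option with
  | of_equiv e ih =>
    let e' := (renameEquiv K e.symm).toRingEquiv
    have : (M.map e').IsMaximal := Ideal.map_isMaximal_of_equiv e'
    rw [← e'.height_map M, ih, Nat.card_congr e]
  | h_empty =>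
    have h := Ideal.height_le_ringKrullDim_of_ne_top hM.ne_top
    rw [ringKrullDim_mvPolynomial_of_isEmpty, ringKrullDim_eq_zero_of_field] at h
    simpa using h
  | h_option ih =>
    rename_i σ _
    let e := (optionEquivLeft K σ).toRingEquiv
    have hP : (M.map e).IsMaximal := Ideal.map_isMaximal_of_equiv e
    rw [← e.height_map M]
    generalize M.map e = P at hP
    let p := P.comap Polynomial.C
    have : p.IsMaximal := Polynomial.isMaximal_comap_C_of_isJacobsonRing P
    have : P.LiesOver p := ⟨rfl⟩
    rw [Polynomial.height_eq_height_add_one p P, ih p, Finite.card_option, Nat.cast_succ]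

lemma card_le_ringKrullDim_quotient_span_range_add_card {K σ ι : Type*} [Field K] [Finite σ]
    [Finite ι] {g : ι → MvPolynomial σ K} (hg : Ideal.span (Set.range g) ≠ ⊤) :
    (Nat.card σ : WithBot ℕ∞) ≤
      ringKrullDim (MvPolynomial σ K ⧸ Ideal.span (Set.range g)) + Nat.card ι := by
  obtain ⟨M, hM, hgM⟩ := Ideal.exists_le_maximal _ hg
  have hcard : (Set.range g).encard ≤ Nat.card ι := by
    rw [← Set.image_univ, ← ENat.card_eq_coe_natCard, ← Set.encard_univ]
    exact Set.encard_image_le g Set.univ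
  have h := Ideal.height_le_ringKrullDim_quotient_add_encard _ (Ideal.span_le.mp hgM)
  rw [height_eq_card_of_isMaximal_mvPolynomial] at h
  refine h.trans ?_
  gcongr
  exact_mod_cast hcard

end KrullDimension

section Linkage

variable {K S : Type*}

/-- The closure equations of a planar four-bar linkage, for a point `p = (x, y, u, v)` with
coordinates in a `K`-algebra: the crank joins `(0, 0)` to `(x, y)`, the rocker joins `(d, 0)` to
`(u, v)`, and the coupler joins `(x, y)` to `(u, v)`. The parameters `a`, `b`, `c` are the *squared*
lengths of crank, rocker and coupler. -/
structure IsFourBarConfiguration [CommRing K] [CommRing S] [Algebra K S] (d a b c : K)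
    (p : Fin 4 → S) : Prop where
  crank : p 0 ^ 2 + p 1 ^ 2 = algebraMap K S a
  rocker : (p 2 - algebraMap K S d) ^ 2 + p 3 ^ 2 = algebraMap K S b
  coupler : (p 2 - p 0) ^ 2 + (p 3 - p 1) ^ 2 = algebraMap K S c

/-- The closure equations of `IsFourBarConfiguration` as polynomials in `K[x, y, u, v]`, the
variables being numbered `0, 1, 2, 3` in this order. -/
noncomputable def fourBarConstraints [CommRing K] (d a b c : K) : Fin 3 → MvPolynomial (Fin 4) K :=
  ![X 0 ^ 2 + X 1 ^ 2 - C a,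
    (X 2 - C d) ^ 2 + X 3 ^ 2 - C b,
    (X 2 - X 0) ^ 2 + (X 3 - X 1) ^ 2 - C c]

lemma fourBarIdeal_eq_span_fourBarConstraints (l₂ l₃ l₄ : ℝ) :
    fourBarIdeal l₂ l₃ l₄ =
      Ideal.span (Set.range (fourBarConstraints 2 (l₂ ^ 2) (l₃ ^ 2) (l₄ ^ 2))) := by
  simp only [fourBarIdeal, fourBarConstraints, Matrix.range_cons, Matrix.range_empty,
    Set.union_empty, Set.singleton_union]

/-- The result of eliminating `y` and `v` from the closure equations, in `K[x, u]` with `X 0 = x`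
and `X 1 = u`. -/
noncomputable def fourBarEliminant [CommRing K] (d a b c : K) : MvPolynomial (Fin 2) K :=
  (2 * X 1 * (C d - X 0) + C (a + b - c - d ^ 2)) ^ 2
    - 4 * (C a - X 0 ^ 2) * (C b - (X 1 - C d) ^ 2)

lemma fourBarEliminant_ne_zero [Field K] [NeZero (2 : K)] {d : K} (hd : d ≠ 0) (a b c : K) :
    fourBarEliminant d a b c ≠ 0 := by
  intro h
  have heval (x u : K) : (2 * u * (d - x) + (a + b - c - d ^ 2)) ^ 2
      - 4 * (a - x ^ 2) * (b - (u - d) ^ 2) = 0 := by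
    simpa [fourBarEliminant] using congrArg (eval ![x, u]) h
  -- A second difference in `u` and a first difference in `x` isolate the term `-8 d x u²`.
  have hcoeff : (2 : K) ^ 4 * d = 0 := by
    linear_combination heval 0 1 + heval 0 (-1) - 2 * heval 0 0
      - (heval 1 1 + heval 1 (-1) - 2 * heval 1 0)
  exact mul_ne_zero (pow_ne_zero 4 two_ne_zero) hd hcoeff

section CommRing

variable [CommRing K] [CommRing S] [Algebra K S] {d a b c : K}

lemma span_fourBarConstraints_le_ker_aeval_iff {p : Fin 4 → S} :
    Ideal.span (Set.range (fourBarConstraints d a b c)) ≤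
      RingHom.ker (aeval p : MvPolynomial (Fin 4) K →ₐ[K] S) ↔
        IsFourBarConfiguration d a b c p := by
  have aeval_eq_zero_iff : (∀ i, aeval p (fourBarConstraints d a b c i) = 0) ↔
      IsFourBarConfiguration d a b c p := by
    simp only [fourBarConstraints, Fin.forall_fin_succ, IsEmpty.forall_iff, and_true,
      Matrix.cons_val_zero, Matrix.cons_val_succ, map_sub, map_add, map_pow, aeval_X, aeval_C,
      sub_eq_zero]
    exact ⟨fun ⟨h₁, h₂, h₃⟩ => ⟨h₁, h₂, h₃⟩, fun h => ⟨h.crank, h.rocker, h.coupler⟩⟩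
  rw [Ideal.span_le, Set.range_subset_iff, ← aeval_eq_zero_iff]
  rfl

lemma isFourBarConfiguration_mk_X (d a b c : K) :
    IsFourBarConfiguration d a b c fun i =>
      Ideal.Quotient.mk (Ideal.span (Set.range (fourBarConstraints d a b c))) (X i) := by
  rw [← span_fourBarConstraints_le_ker_aeval_iff, aeval_mk_X]
  exact (Ideal.Quotient.mkₐ_ker K _).ge

namespace IsFourBarConfiguration

variable {p : Fin 4 → S}

lemma two_mul_mul_eq (hp : IsFourBarConfiguration d a b c p) :
    2 * p 3 * p 1 =
      2 * p 2 * (algebraMap K S d - p 0) + algebraMap K S (a + b - c - d ^ 2) := by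
  simp only [map_sub, map_add, map_pow]
  linear_combination hp.crank + hp.rocker - hp.coupler

lemma aeval_fourBarEliminant (hp : IsFourBarConfiguration d a b c p) :
    aeval ![p 0, p 2] (fourBarEliminant d a b c) = 0 := by
  have hy : algebraMap K S a - p 0 ^ 2 = p 1 ^ 2 := by linear_combination -hp.crank
  have hv : algebraMap K S b - (p 2 - algebraMap K S d) ^ 2 = p 3 ^ 2 := by
    linear_combination -hp.rocker
  calc aeval ![p 0, p 2] (fourBarEliminant d a b c)
      = (2 * p 2 * (algebraMap K S d - p 0) + algebraMap K S (a + b - c - d ^ 2)) ^ 2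
        - 4 * (algebraMap K S a - p 0 ^ 2)
          * (algebraMap K S b - (p 2 - algebraMap K S d) ^ 2) := by simp [fourBarEliminant]
    _ = (2 * p 3 * p 1) ^ 2 - 4 * p 1 ^ 2 * p 3 ^ 2 := by rw [← hp.two_mul_mul_eq, hy, hv]
    _ = 0 := by ring

lemma isIntegral_aeval (hp : IsFourBarConfiguration d a b c p)
    (hgen : Algebra.adjoin K (Set.range p) = ⊤) :
    (aeval ![p 0, p 2] : MvPolynomial (Fin 2) K →ₐ[K] S).toRingHom.IsIntegral := by
  set f : MvPolynomial (Fin 2) K →ₐ[K] S := aeval ![p 0, p 2] with hf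
  have isIntegralElem_of_sq {s : S} {q : MvPolynomial (Fin 2) K} (hs : s ^ 2 = f q) :
      (f : MvPolynomial (Fin 2) K →+* S).IsIntegralElem s :=
    ⟨Polynomial.X ^ 2 - Polynomial.C q, Polynomial.monic_X_pow_sub_C q two_ne_zero, by simp [hs]⟩
  have hx : f (X 0) = p 0 := by simp [hf]
  have hu : f (X 1) = p 2 := by simp [hf]
  have hy : p 1 ^ 2 = f (C a - X 0 ^ 2) := by
    simp only [map_sub, map_pow, hx, algHom_C]
    linear_combination hp.crank
  have hv : p 3 ^ 2 = f (C b - (X 1 - C d) ^ 2) := by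
    simp only [map_sub, map_pow, hu, algHom_C]
    linear_combination hp.rocker
  refine isIntegral_of_adjoin_eq_top f hgen (Set.forall_mem_range.mpr fun i => ?_)
  fin_cases i
  · exact hx ▸ (f : MvPolynomial (Fin 2) K →+* S).isIntegralElem_map
  · exact isIntegralElem_of_sq hy
  · exact hu ▸ (f : MvPolynomial (Fin 2) K →+* S).isIntegralElem_map
  · exact isIntegralElem_of_sq hv

end IsFourBarConfiguration

end CommRing

variable [Field K] [NeZero (2 : K)] {d : K}

lemma IsFourBarConfiguration.ringKrullDim_le_one [CommRing S] [Algebra K S] {a b c : K}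
    {p : Fin 4 → S} (hp : IsFourBarConfiguration d a b c p) (hd : d ≠ 0)
    (hgen : Algebra.adjoin K (Set.range p) = ⊤) : ringKrullDim S ≤ 1 := by
  have h : ringKrullDim S + 1 ≤ 1 + 1 := by
    calc ringKrullDim S + 1
        ≤ ringKrullDim (MvPolynomial (Fin 2) K) :=
          ringKrullDim_succ_le_of_isIntegral (hp.isIntegral_aeval hgen)
            (mem_nonZeroDivisors_of_ne_zero (fourBarEliminant_ne_zero hd a b c))
            hp.aeval_fourBarEliminant
      _ = 1 + 1 := by
          simp [MvPolynomial.ringKrullDim_of_isNoetherianRing, one_add_one_eq_two]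
  exact (ENat.WithBot.add_le_add_natCast_right_iff (c := 1)).mp h

lemma exists_isFourBarConfiguration (L : Type*) [Field L] [IsAlgClosed L] [Algebra K L]
    (hd : d ≠ 0) (a b c : K) : ∃ p : Fin 4 → L, IsFourBarConfiguration d a b c p := by
  let φ := algebraMap K L
  have h2 : (2 : L) ≠ 0 := map_ofNat φ 2 ▸ (map_ne_zero φ).mpr two_ne_zero
  -- The crank lies along the ground line, without reaching the other ground pivot.
  obtain ⟨x, hxa, hxd⟩ : ∃ x : L, x ^ 2 = φ a ∧ φ d - x ≠ 0 := by
    obtain ⟨x, hx⟩ := IsAlgClosed.exists_pow_nat_eq (φ a) two_pos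
    by_cases hxd : φ d - x = 0
    · refine ⟨-x, by rw [neg_sq, hx], fun h => ?_⟩
      have : 2 * φ d = 0 := by linear_combination hxd + h
      exact mul_ne_zero h2 ((map_ne_zero φ).mpr hd) this
    · exact ⟨x, hx, hxd⟩
  obtain ⟨u, hu⟩ : ∃ u : L, 2 * (φ d - x) * u = φ c + φ d ^ 2 - φ a - φ b :=
    ⟨_, mul_div_cancel₀ _ (mul_ne_zero h2 hxd)⟩
  obtain ⟨v, hv⟩ := IsAlgClosed.exists_pow_nat_eq (φ b - (u - φ d) ^ 2) two_pos
  refine ⟨![x, 0, u, v], ⟨?_, ?_, ?_⟩⟩ <;> simp only [Matrix.cons_val]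
  · linear_combination hxa
  · linear_combination hv
  · linear_combination hxa + hv + hu

lemma span_fourBarConstraints_ne_top (hd : d ≠ 0) (a b c : K) :
    Ideal.span (Set.range (fourBarConstraints d a b c)) ≠ ⊤ := by
  obtain ⟨p, hp⟩ := exists_isFourBarConfiguration (AlgebraicClosure K) hd a b c
  exact ne_top_of_le_ne_top (RingHom.ker_ne_top _) (span_fourBarConstraints_le_ker_aeval_iff.mpr hp)

end Linkage

theorem fourBar_krullDim_eq_one_general {K : Type*} [Field K] [NeZero (2 : K)] {d : K} (hd : d ≠ 0)
    (a b c : K) :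
    ringKrullDim
      (MvPolynomial (Fin 4) K ⧸ Ideal.span (Set.range (fourBarConstraints d a b c))) = 1 := by
  refine le_antisymm ((isFourBarConfiguration_mk_X d a b c).ringKrullDim_le_one hd
    (adjoin_range_mk_X_eq_top _)) ?_
  have h := card_le_ringKrullDim_quotient_span_range_add_card
    (span_fourBarConstraints_ne_top hd a b c)
  rw [Nat.card_fin, Nat.card_fin] at h
  exact (ENat.WithBot.add_le_add_natCast_right_iff (c := 3)).mp h

/-- **Dimension of the configuration space of the four-bar mechanism.**
For positive bar lengths `l₂, l₃, l₄` with `l₂ ≠ 2`, the Krull dimension of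
`ℝ[x, y, u, v]/I` is `1`, where `I` is the four-bar constraint ideal. -/
theorem fourBar_krullDim_eq_one
    (l₂ l₃ l₄ : ℝ) (h₂ : 0 < l₂) (h₃ : 0 < l₃) (h₄ : 0 < l₄) (hne : l₂ ≠ 2) :
    ringKrullDim (MvPolynomial (Fin 4) ℝ ⧸ fourBarIdeal l₂ l₃ l₄) = 1 := by
  rw [fourBarIdeal_eq_span_fourBarConstraints]
  exact fourBar_krullDim_eq_one_general two_ne_zero _ _ _
end

section
/- Let l₂, l₄ be positive real numbers with l₂ ∉ {2, 8/3}, l₄ ≠ 2, l₂ + l₄ ≠ 4 and l₃ := l₂ + l₄ − 2 > 0, and let I = ⟨ x² + y² − l₂², (u − 2)² + v² − l₃², (u − x)² + (v − y)² − l₄² ⟩ ≤ ℝ[x, y, u, v]. Then the point p = (l₂, 0, l₂ + l₄, 0) lies in V_ℝ(I) and p is not an analytic manifold point of V_ℝ(I). -/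
open Filter Set Topology

lemma tangentConeAt_subset_of_isClosed_cone {𝕜 E : Type*} [AddCommGroup E] [SMul 𝕜 E]
    [TopologicalSpace E] {s C : Set E} {x : E} (hC : IsClosed C)
    (hsmul : ∀ (c : 𝕜), ∀ v ∈ C, c • v ∈ C) (hs : ∀ d, x + d ∈ s → d ∈ C) :
    tangentConeAt 𝕜 s x ⊆ C := by
  intro v hv
  obtain ⟨ι, l, hl, c, d, -, hds, hcd⟩ := exists_fun_of_mem_tangentConeAt hv
  exact hC.mem_of_tendsto hcd (hds.mono fun n hn ↦ hsmul _ _ (hs _ hn))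

section TopologicalModule

variable {𝕜 E : Type*} [DivisionRing 𝕜] [TopologicalSpace 𝕜] [(𝓝[≠] (0 : 𝕜)).NeBot]
  [AddCommGroup E] [Module 𝕜 E] [TopologicalSpace E] [ContinuousSMul 𝕜 E] {s : Set E} {x : E}

lemma mem_tangentConeAt_of_continuousAt {w : 𝕜 → E} (hw : ContinuousAt w 0)
    (hs : ∀ᶠ t in 𝓝[≠] 0, x + t • w t ∈ s) : w 0 ∈ tangentConeAt 𝕜 s x := by
  have hw' : Tendsto w (𝓝[≠] 0) (𝓝 (w 0)) := hw.mono_left nhdsWithin_le_nhds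
  refine mem_tangentConeAt_of_seq (𝓝[≠] 0) (·⁻¹) (fun t ↦ t • w t) ?_ hs (hw'.congr' ?_)
  · simpa using (tendsto_id.mono_left nhdsWithin_le_nhds).smul hw'
  · filter_upwards [self_mem_nhdsWithin] with t ht
    rw [inv_smul_smul₀ ht]

lemma tangentConeAt_submodule {L : Submodule 𝕜 E} (hL : IsClosed (L : Set E)) (hx : x ∈ L) :
    tangentConeAt 𝕜 (L : Set E) x = L := by
  refine Subset.antisymm ?_ fun v hv ↦ ?_
  · exact tangentConeAt_subset_of_isClosed_cone hL (fun c v hv ↦ L.smul_mem c hv)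
      fun d hd ↦ (L.add_mem_iff_right hx).1 hd
  · exact mem_tangentConeAt_of_continuousAt (w := fun _ ↦ v) continuousAt_const
      (.of_forall fun t ↦ L.add_mem hx (L.smul_mem t hv))

end TopologicalModule

section Differential

variable {𝕜 E F : Type*} [NontriviallyNormedField 𝕜]
  [NormedAddCommGroup E] [NormedSpace 𝕜 E] [NormedAddCommGroup F] [NormedSpace 𝕜 F]
  {s : Set E} {x : E}

lemma mapsTo_tangentConeAt_of_hasFDerivAt {f : E → F} {f' : E →L[𝕜] F} {t : Set F}
    (hf : HasFDerivAt f f' x) (hst : MapsTo f s t) :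
    MapsTo f' (tangentConeAt 𝕜 s x) (tangentConeAt 𝕜 t (f x)) :=
  hf.hasFDerivWithinAt.mapsTo_tangent_cone.mono_right (tangentConeAt_mono hst.image_subset)

lemma tangentConeAt_eq_preimage {φ : E → F} {ψ : F → E} {φ' : E →L[𝕜] F} {ψ' : F →L[𝕜] E}
    {t : Set F} (hφ : HasFDerivAt φ φ' x) (hψ : HasFDerivAt ψ ψ' (φ x))
    (hφst : MapsTo φ s t) (hψts : MapsTo ψ t s) (hinv : ψ ∘ φ =ᶠ[𝓝 x] id) :
    tangentConeAt 𝕜 s x = φ' ⁻¹' tangentConeAt 𝕜 t (φ x) := by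
  refine Subset.antisymm (mapsTo_tangentConeAt_of_hasFDerivAt hφ hφst) fun v hv ↦ ?_
  have hψφ : ψ' (φ' v) = v :=
    DFunLike.congr_fun ((hψ.comp x hφ).unique ((hasFDerivAt_id x).congr_of_eventuallyEq hinv)) v
  have hx : ψ (φ x) = x := hinv.self_of_nhds
  simpa only [hψφ, hx] using mapsTo_tangentConeAt_of_hasFDerivAt hψ hψts hv

end Differential

lemma IsAnalyticManifoldPointAt.exists_submodule_coe_eq_tangentConeAt {n : ℕ}
    {X : Set (Fin n → ℝ)} {p : Fin n → ℝ} (h : IsAnalyticManifoldPointAt X p) (hp : p ∈ X) :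
    ∃ W : Submodule ℝ (Fin n → ℝ), (W : Set (Fin n → ℝ)) = tangentConeAt ℝ X p := by
  obtain ⟨d, U, V, φ, ψ, hU, hV, hpU, hφ, hψ, hφUV, hψVU, hψφ, hφψ, hXU⟩ := h
  let L : Submodule ℝ (Fin n → ℝ) := Submodule.pi {i | d ≤ (i : ℕ)} fun _ ↦ ⊥
  have mem_X_iff : ∀ x ∈ U, x ∈ X ↔ φ x ∈ L := fun x hx ↦ by
    have := Set.ext_iff.1 hXU x
    simpa [hx, L, Submodule.mem_pi] using this
  have hφX : MapsTo φ (X ∩ U) (L ∩ V) := fun x hx ↦ ⟨(mem_X_iff x hx.2).1 hx.1, hφUV hx.2⟩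
  have hψL : MapsTo ψ (L ∩ V) (X ∩ U) := fun y hy ↦
    ⟨(mem_X_iff _ (hψVU hy.2)).2 (by rw [hφψ y hy.2]; exact hy.1), hψVU hy.2⟩
  have hcone := tangentConeAt_eq_preimage (hφ p hpU).differentiableAt.hasFDerivAt
    (hψ _ (hφUV hpU)).differentiableAt.hasFDerivAt hφX hψL
    (eventually_of_mem (hU.mem_nhds hpU) hψφ)
  rw [tangentConeAt_inter_nhds (hU.mem_nhds hpU),
    tangentConeAt_inter_nhds (hV.mem_nhds (hφUV hpU)),
    tangentConeAt_submodule L.closed_of_finiteDimensional ((mem_X_iff p hpU).1 hp)] at hcone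
  exact ⟨L.comap (fderiv ℝ φ p : (Fin n → ℝ) →ₗ[ℝ] Fin n → ℝ), hcone.symm⟩

/-- The root of `α r² - 2 r + γ` that is continuous in the coefficients, also across `α = 0`. -/
noncomputable def boundedRoot (α γ : ℝ) : ℝ := γ / (1 + √(1 - α * γ))

section BoundedRoot

variable {α γ : ℝ}

lemma boundedRoot_isRoot (h : α * γ ≤ 1) :
    α * boundedRoot α γ ^ 2 - 2 * boundedRoot α γ + γ = 0 := by
  have hsq : √(1 - α * γ) ^ 2 = 1 - α * γ := Real.sq_sqrt (by linarith)
  have hne : 1 + √(1 - α * γ) ≠ 0 := by positivity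
  rw [boundedRoot]
  field_simp
  linear_combination γ * hsq

lemma continuous_boundedRoot_left (γ : ℝ) : Continuous fun α ↦ boundedRoot α γ :=
  continuous_const.div (by fun_prop) fun _ ↦ by positivity

/-- `(boundedRoot α γ, 1)` and `(1, boundedRoot γ α)` span the two null lines of the form
`α s² - 2 s t + γ t²`. -/
lemma quadratic_boundedRoot_add_ne_zero (h : α * γ < 1) :
    α * (boundedRoot α γ + 1) ^ 2 - 2 * ((boundedRoot α γ + 1) * (1 + boundedRoot γ α))
      + γ * (1 + boundedRoot γ α) ^ 2 ≠ 0 := by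
  have hpos : 0 < √(1 - α * γ) := Real.sqrt_pos.2 (by linarith)
  have hsq : √(1 - α * γ) ^ 2 = 1 - α * γ := Real.sq_sqrt (by linarith)
  have hsum : α * (boundedRoot α γ + 1) ^ 2 - 2 * ((boundedRoot α γ + 1) * (1 + boundedRoot γ α))
      + γ * (1 + boundedRoot γ α) ^ 2 = -(4 * √(1 - α * γ) ^ 2 / (1 + √(1 - α * γ))) := by
    rw [boundedRoot, boundedRoot, mul_comm γ α]
    generalize √(1 - α * γ) = D at hpos hsq ⊢
    field_simp
    linear_combination (α + γ + 2 + 4 * D) * hsq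
  rw [hsum]
  exact neg_ne_zero.2 (by positivity)

end BoundedRoot

lemma mem_realZeroSet_fourBarIdeal {l₂ l₃ l₄ : ℝ} {q : Fin 4 → ℝ} :
    q ∈ realZeroSet (fourBarIdeal l₂ l₃ l₄) ↔
      q 0 ^ 2 + q 1 ^ 2 = l₂ ^ 2 ∧ (q 2 - 2) ^ 2 + q 3 ^ 2 = l₃ ^ 2 ∧
        (q 2 - q 0) ^ 2 + (q 3 - q 1) ^ 2 = l₄ ^ 2 := by
  have hker : q ∈ realZeroSet (fourBarIdeal l₂ l₃ l₄) ↔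
      fourBarIdeal l₂ l₃ l₄ ≤ RingHom.ker (MvPolynomial.aeval (R := ℝ) q) := Iff.rfl
  rw [hker, fourBarIdeal, Ideal.span_le]
  simp [Set.insert_subset_iff, RingHom.mem_ker, sub_eq_zero]

/-- The combination `l₂ l₃ p₃ + l₃ l₄ p₁ - l₂ l₄ p₂` of the constraints, evaluated at
`(l₂, 0, l₂ + l₄, 0) + w`; its constant and linear terms cancel when `l₂ + l₄ = 2 + l₃`. -/
def coneForm (l₂ l₃ l₄ : ℝ) (w : Fin 4 → ℝ) : ℝ :=
  l₂ * l₃ * ((w 2 - w 0) ^ 2 + (w 3 - w 1) ^ 2) + l₃ * l₄ * (w 0 ^ 2 + w 1 ^ 2)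
    - l₂ * l₄ * (w 2 ^ 2 + w 3 ^ 2)

lemma coneForm_smul (l₂ l₃ l₄ c : ℝ) (w : Fin 4 → ℝ) :
    coneForm l₂ l₃ l₄ (c • w) = c ^ 2 * coneForm l₂ l₃ l₄ w := by
  simp only [coneForm, Pi.smul_apply, smul_eq_mul]
  ring

lemma continuous_coneForm (l₂ l₃ l₄ : ℝ) : Continuous (coneForm l₂ l₃ l₄) := by
  unfold coneForm
  fun_prop

/-- The closing condition `(u - x)² + (v - y)² = l₄²` of a mechanism with `l₂ + l₄ = 2 + l₃`, in
terms of the tangents `s`, `t` of half the angles between the ground bar and the bars `l₂ = 2 / a`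
and `l₃ = 2 / b`. -/
def halfAngleCurve (a b : ℝ) : Set (ℝ × ℝ) :=
  {(s, t) | (s - t) ^ 2 + b * s ^ 2 * (1 + t ^ 2) = a * t ^ 2 * (1 + s ^ 2)}

section HalfAngleCurve

variable {a b : ℝ}

lemma boundedRoot_mem_tangentConeAt_halfAngleCurve (h : (1 + b) * (1 - a) < 1) :
    (boundedRoot (1 + b) (1 - a), 1) ∈ tangentConeAt ℝ (halfAngleCurve a b) 0 := by
  let α : ℝ → ℝ := fun t ↦ 1 + b + (b - a) * t ^ 2
  let w : ℝ → ℝ × ℝ := fun t ↦ (boundedRoot (α t) (1 - a), 1)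
  have hα : Continuous α := by fun_prop
  have hw : Continuous w := ((continuous_boundedRoot_left _).comp hα).prodMk continuous_const
  have hα₀ : α 0 = 1 + b := by simp [α]
  have hlt : ∀ᶠ t in 𝓝 0, α t * (1 - a) < 1 :=
    Continuous.continuousAt (by fun_prop) |>.eventually_lt_const (by rwa [hα₀])
  have hmem : ∀ᶠ t in 𝓝[≠] (0 : ℝ), 0 + t • w t ∈ halfAngleCurve a b := by
    filter_upwards [nhdsWithin_le_nhds hlt] with t ht
    have hroot := boundedRoot_isRoot ht.le
    simp only [halfAngleCurve, w, α, zero_add, Prod.smul_mk, smul_eq_mul, mem_ofPred_eq] at hroot ⊢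
    linear_combination t ^ 2 * hroot
  simpa only [w, hα₀] using mem_tangentConeAt_of_continuousAt hw.continuousAt hmem

lemma boundedRoot_mem_tangentConeAt_halfAngleCurve_swap (h : (1 + b) * (1 - a) < 1) :
    (1, boundedRoot (1 - a) (1 + b)) ∈ tangentConeAt ℝ (halfAngleCurve a b) 0 := by
  have hswap : MapsTo (ContinuousLinearEquiv.prodComm ℝ ℝ ℝ)
      (halfAngleCurve (-b) (-a)) (halfAngleCurve a b) := by
    rintro ⟨s, t⟩ (hst : (s - t) ^ 2 + -a * s ^ 2 * (1 + t ^ 2) = -b * t ^ 2 * (1 + s ^ 2))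
    change (t - s) ^ 2 + b * t ^ 2 * (1 + s ^ 2) = a * s ^ 2 * (1 + t ^ 2)
    linear_combination hst
  have hmem := boundedRoot_mem_tangentConeAt_halfAngleCurve (a := -b) (b := -a) (by linarith)
  simpa [← sub_eq_add_neg] using mapsTo_tangentConeAt_of_hasFDerivAt
    (ContinuousLinearEquiv.prodComm ℝ ℝ ℝ).hasFDerivAt hswap hmem

end HalfAngleCurve

/-- The configuration in which the bars `l₂` and `l₃` make the angles `2 arctan s` and
`2 arctan t` with the ground bar. -/
noncomputable def configuration (l₂ l₃ : ℝ) (z : ℝ × ℝ) : Fin 4 → ℝ :=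
  ![l₂ * ((1 - z.1 ^ 2) / (1 + z.1 ^ 2)), l₂ * (2 * z.1 / (1 + z.1 ^ 2)),
    2 + l₃ * ((1 - z.2 ^ 2) / (1 + z.2 ^ 2)), l₃ * (2 * z.2 / (1 + z.2 ^ 2))]

/-- The derivative of `configuration` at the origin. -/
noncomputable def configurationDeriv (l₂ l₃ : ℝ) : ℝ × ℝ →L[ℝ] Fin 4 → ℝ :=
  .pi ![0, (2 * l₂) • .fst ℝ ℝ ℝ, 0, (2 * l₃) • .snd ℝ ℝ ℝ]

lemma configurationDeriv_apply (l₂ l₃ s t : ℝ) :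
    configurationDeriv l₂ l₃ (s, t) = ![0, 2 * l₂ * s, 0, 2 * l₃ * t] := by
  ext i
  fin_cases i <;> simp [configurationDeriv]

lemma hasFDerivAt_configuration (l₂ l₃ : ℝ) :
    HasFDerivAt (configuration l₂ l₃) (configurationDeriv l₂ l₃) 0 := by
  have hden : HasDerivAt (fun s : ℝ ↦ 1 + s ^ 2) 0 0 := by
    simpa using (hasDerivAt_pow 2 (0 : ℝ)).const_add 1
  have hcos : HasDerivAt (fun s : ℝ ↦ (1 - s ^ 2) / (1 + s ^ 2)) 0 0 := by
    simpa using ((hasDerivAt_pow 2 (0 : ℝ)).const_sub 1).fun_div hden (by simp)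
  have hsin : HasDerivAt (fun s : ℝ ↦ 2 * s / (1 + s ^ 2)) 2 0 := by
    simpa using ((hasDerivAt_id (0 : ℝ)).const_mul 2).fun_div hden (by simp)
  have hfst := hasFDerivAt_fst (𝕜 := ℝ) (p := (0 : ℝ × ℝ))
  have hsnd := hasFDerivAt_snd (𝕜 := ℝ) (p := (0 : ℝ × ℝ))
  have hx : HasFDerivAt (fun z : ℝ × ℝ ↦ l₂ * ((1 - z.1 ^ 2) / (1 + z.1 ^ 2)))
      (0 : ℝ × ℝ →L[ℝ] ℝ) 0 := by
    simpa [Function.comp_def] using (hcos.const_mul l₂).comp_hasFDerivAt (0 : ℝ × ℝ) hfst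
  have hy : HasFDerivAt (fun z : ℝ × ℝ ↦ l₂ * (2 * z.1 / (1 + z.1 ^ 2)))
      ((2 * l₂) • ContinuousLinearMap.fst ℝ ℝ ℝ) 0 := by
    simpa [Function.comp_def, mul_comm] using
      (hsin.const_mul l₂).comp_hasFDerivAt (0 : ℝ × ℝ) hfst
  have hu : HasFDerivAt (fun z : ℝ × ℝ ↦ 2 + l₃ * ((1 - z.2 ^ 2) / (1 + z.2 ^ 2)))
      (0 : ℝ × ℝ →L[ℝ] ℝ) 0 := by
    simpa [Function.comp_def] using
      ((hcos.const_mul l₃).const_add 2).comp_hasFDerivAt (0 : ℝ × ℝ) hsnd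
  have hv : HasFDerivAt (fun z : ℝ × ℝ ↦ l₃ * (2 * z.2 / (1 + z.2 ^ 2)))
      ((2 * l₃) • ContinuousLinearMap.snd ℝ ℝ ℝ) 0 := by
    simpa [Function.comp_def, mul_comm] using
      (hsin.const_mul l₃).comp_hasFDerivAt (0 : ℝ × ℝ) hsnd
  exact hasFDerivAt_pi.2 (Fin.forall_fin_succ.2 ⟨hx, Fin.forall_fin_succ.2 ⟨hy,
    Fin.forall_fin_two.2 ⟨hu, hv⟩⟩⟩)

section Folded

variable {l₂ l₃ l₄ : ℝ}

lemma coneForm_eq_zero_of_add_mem (hfold : l₂ + l₄ = 2 + l₃) {w : Fin 4 → ℝ}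
    (hw : ![l₂, 0, l₂ + l₄, 0] + w ∈ realZeroSet (fourBarIdeal l₂ l₃ l₄)) :
    coneForm l₂ l₃ l₄ w = 0 := by
  obtain ⟨h₁, h₂, h₃⟩ := mem_realZeroSet_fourBarIdeal.1 hw
  obtain rfl : l₃ = l₂ + l₄ - 2 := by linarith
  simp only [Pi.add_apply, Matrix.cons_val] at h₁ h₂ h₃
  rw [coneForm]
  linear_combination l₂ * (l₂ + l₄ - 2) * h₃ + (l₂ + l₄ - 2) * l₄ * h₁ - l₂ * l₄ * h₂

lemma coneForm_eq_zero_of_mem_tangentConeAt (hfold : l₂ + l₄ = 2 + l₃) {w : Fin 4 → ℝ}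
    (hw : w ∈ tangentConeAt ℝ (realZeroSet (fourBarIdeal l₂ l₃ l₄)) ![l₂, 0, l₂ + l₄, 0]) :
    coneForm l₂ l₃ l₄ w = 0 := by
  refine tangentConeAt_subset_of_isClosed_cone (C := {v | coneForm l₂ l₃ l₄ v = 0})
    (isClosed_eq (continuous_coneForm l₂ l₃ l₄) continuous_const) (fun c v hv ↦ ?_)
    (fun d ↦ coneForm_eq_zero_of_add_mem hfold) hw
  rw [mem_ofPred_eq] at hv ⊢
  rw [coneForm_smul, hv, mul_zero]

lemma coneForm_configurationDeriv (hfold : l₂ + l₄ = 2 + l₃) (h₂ : l₂ ≠ 0) (h₃ : l₃ ≠ 0)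
    (s t : ℝ) :
    coneForm l₂ l₃ l₄ (configurationDeriv l₂ l₃ (s, t)) =
      4 * (l₂ * l₃) ^ 2 * ((1 + 2 / l₃) * s ^ 2 - 2 * (s * t) + (1 - 2 / l₂) * t ^ 2) := by
  obtain rfl : l₄ = 2 + l₃ - l₂ := by linarith
  rw [configurationDeriv_apply, coneForm]
  simp only [Matrix.cons_val]
  field_simp
  ring

lemma configuration_zero (hfold : l₂ + l₄ = 2 + l₃) :
    configuration l₂ l₃ 0 = ![l₂, 0, l₂ + l₄, 0] := by
  simp [configuration, hfold]

lemma mapsTo_configuration_halfAngleCurve (hfold : l₂ + l₄ = 2 + l₃) (h₂ : l₂ ≠ 0) (h₃ : l₃ ≠ 0) :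
    MapsTo (configuration l₂ l₃) (halfAngleCurve (2 / l₂) (2 / l₃))
      (realZeroSet (fourBarIdeal l₂ l₃ l₄)) := by
  rintro ⟨s, t⟩ (hst : (s - t) ^ 2 + 2 / l₃ * s ^ 2 * (1 + t ^ 2) = 2 / l₂ * t ^ 2 * (1 + s ^ 2))
  obtain rfl : l₄ = 2 + l₃ - l₂ := by linarith
  have hs : 1 + s ^ 2 ≠ 0 := by positivity
  have ht : 1 + t ^ 2 ≠ 0 := by positivity
  rw [mem_realZeroSet_fourBarIdeal]
  simp only [configuration, Matrix.cons_val]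
  field_simp at hst ⊢
  refine ⟨by ring, by ring, ?_⟩
  linear_combination 4 * (1 + s ^ 2) * (1 + t ^ 2) * hst

lemma configurationDeriv_mem_tangentConeAt (hfold : l₂ + l₄ = 2 + l₃) (h₂ : l₂ ≠ 0) (h₃ : l₃ ≠ 0)
    {v : ℝ × ℝ} (hv : v ∈ tangentConeAt ℝ (halfAngleCurve (2 / l₂) (2 / l₃)) 0) :
    configurationDeriv l₂ l₃ v ∈
      tangentConeAt ℝ (realZeroSet (fourBarIdeal l₂ l₃ l₄)) ![l₂, 0, l₂ + l₄, 0] :=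
  configuration_zero hfold ▸ mapsTo_tangentConeAt_of_hasFDerivAt (hasFDerivAt_configuration l₂ l₃)
    (mapsTo_configuration_halfAngleCurve hfold h₂ h₃) hv

lemma folded_mem_realZeroSet (hfold : l₂ + l₄ = 2 + l₃) :
    ![l₂, 0, l₂ + l₄, 0] ∈ realZeroSet (fourBarIdeal l₂ l₃ l₄) := by
  obtain rfl : l₃ = l₂ + l₄ - 2 := by linarith
  simp [mem_realZeroSet_fourBarIdeal]

lemma one_add_mul_one_sub_lt_one_of_folded (hfold : l₂ + l₄ = 2 + l₃) (hpos : 0 < l₂ * l₃ * l₄) :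
    (1 + 2 / l₃) * (1 - 2 / l₂) < 1 := by
  obtain ⟨h₂, h₃⟩ := mul_ne_zero_iff.1 (left_ne_zero_of_mul hpos.ne')
  have hdisc : 1 - (1 + 2 / l₃) * (1 - 2 / l₂) = 2 * (l₂ * l₃ * l₄) / (l₂ * l₃) ^ 2 := by
    field_simp
    linear_combination -2 * hfold
  have : 0 < 2 * (l₂ * l₃ * l₄) / (l₂ * l₃) ^ 2 := by positivity
  linarith

end Folded

theorem fourBar_singular_point_not_manifold_point_general {l₂ l₃ l₄ : ℝ}
    (hfold : l₂ + l₄ = 2 + l₃) (hpos : 0 < l₂ * l₃ * l₄) :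
    ![l₂, 0, l₂ + l₄, 0] ∈ realZeroSet (fourBarIdeal l₂ l₃ l₄) ∧
    ¬ IsAnalyticManifoldPointAt (realZeroSet (fourBarIdeal l₂ l₃ l₄)) ![l₂, 0, l₂ + l₄, 0] := by
  have hp := folded_mem_realZeroSet hfold
  refine ⟨hp, fun hman ↦ ?_⟩
  obtain ⟨h₂, h₃⟩ := mul_ne_zero_iff.1 (left_ne_zero_of_mul hpos.ne')
  have hdisc := one_add_mul_one_sub_lt_one_of_folded hfold hpos
  obtain ⟨W, hW⟩ := hman.exists_submodule_coe_eq_tangentConeAt hp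
  have hw₁ := configurationDeriv_mem_tangentConeAt hfold h₂ h₃
    (boundedRoot_mem_tangentConeAt_halfAngleCurve hdisc)
  have hw₂ := configurationDeriv_mem_tangentConeAt hfold h₂ h₃
    (boundedRoot_mem_tangentConeAt_halfAngleCurve_swap hdisc)
  rw [← hW, SetLike.mem_coe] at hw₁ hw₂
  have hsum := coneForm_eq_zero_of_mem_tangentConeAt hfold
    (hW ▸ SetLike.mem_coe.2 (W.add_mem hw₁ hw₂))
  rw [← map_add, Prod.mk_add_mk, coneForm_configurationDeriv hfold h₂ h₃] at hsum
  exact mul_ne_zero (by positivity) (quadratic_boundedRoot_add_ne_zero hdisc) hsum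

/-- **The singular four-bar configuration is a C-space singularity.**
Let `l₂, l₄ > 0` with `l₂ ∉ {2, 8/3}`, `l₄ ≠ 2`, `l₂ + l₄ ≠ 4` and
`l₃ := l₂ + l₄ − 2 > 0`.  Then the point `p = (l₂, 0, l₂ + l₄, 0)` lies in `V_ℝ(I)` for
the four-bar constraint ideal `I` (with bar lengths `l₂, l₃, l₄`), and `p` is *not* an
analytic manifold point of `V_ℝ(I)`. -/
theorem fourBar_singular_point_not_manifold_point
    (l₂ l₄ : ℝ) (h₂ : 0 < l₂) (h₄ : 0 < l₄)
    (h₂2 : l₂ ≠ 2) (h₂83 : l₂ ≠ 8 / 3) (h₄2 : l₄ ≠ 2) (hsum : l₂ + l₄ ≠ 4)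
    (h₃ : 0 < l₂ + l₄ - 2) :
    ![l₂, 0, l₂ + l₄, 0] ∈ realZeroSet (fourBarIdeal l₂ (l₂ + l₄ - 2) l₄) ∧
    ¬ IsAnalyticManifoldPointAt (realZeroSet (fourBarIdeal l₂ (l₂ + l₄ - 2) l₄))
        ![l₂, 0, l₂ + l₄, 0] :=
  fourBar_singular_point_not_manifold_point_general (by ring)
    (mul_pos (mul_pos h₂ h₃) h₄)
end
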